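/- Let N ≥ 2 and 1 < λ < λ_s, where λ_s := (N+2)/(N−2) if N > 2 and λ_s := ∞ if N = 2, and let Ω be an arbitrary domain in ℝ^N with Ω ≠ ℝ^N. Then for any nonnegative integer s there exists a constant C = C(N, λ, s) > 0, independent of Ω and u, such that every nonnegative smooth solution u of −Δu = u^λ on Ω satisfies Σ_{r=0}^{s} |∇^r u(x)|^{(λ−1)/((λ−1)r + 2)} ≤ C · dist(x, ∂Ω)^{−1} for all x ∈ Ω. -/

import Mathlib

open MeasureTheory Metric

/-- The Laplacian of `u : ℝ^N → ℝ`, as the trace of the second derivative: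
`Δu(x) = ∑ i, ∂²u/∂x_i²(x)`. -/
noncomputable def laplacian {N : ℕ} (u : EuclideanSpace ℝ (Fin N) → ℝ)
    (x : EuclideanSpace ℝ (Fin N)) : ℝ :=
  ∑ i : Fin N,
    iteratedFDeriv ℝ 2 u x ![EuclideanSpace.single i (1 : ℝ), EuclideanSpace.single i (1 : ℝ)]

namespace HODE
open scoped ContDiff Topology

abbrev Eu (N : ℕ) := EuclideanSpace ℝ (Fin N)

/-- Standard basis vector. -/
noncomputable def bv {N : ℕ} (i : Fin N) : Eu N := EuclideanSpace.single i (1 : ℝ)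

/-- Partial derivative. -/
noncomputable def pd {N : ℕ} (i : Fin N) (f : Eu N → ℝ) (x : Eu N) : ℝ := fderiv ℝ f x (bv i)

variable {N : ℕ} {O : Set (Eu N)} {f g : Eu N → ℝ} {x : Eu N}

lemma two_le_infty : (2 : ℕ∞ω) ≤ ∞ := by
  show ((2 : ℕ∞) : ℕ∞ω) ≤ ((⊤ : ℕ∞) : ℕ∞ω)
  exact WithTop.coe_le_coe.2 le_top

lemma bv_apply (i j : Fin N) : (bv i : Eu N) j = if j = i then 1 else 0 := by
  simp [bv]

lemma norm_bv (i : Fin N) : ‖(bv i : Eu N)‖ = 1 := by simp [bv]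

lemma cda (hO : IsOpen O) (hf : ContDiffOn ℝ ∞ f O) (hx : x ∈ O) : ContDiffAt ℝ ∞ f x :=
  hf.contDiffAt (hO.mem_nhds hx)

lemma da (hO : IsOpen O) (hf : ContDiffOn ℝ ∞ f O) (hx : x ∈ O) : DifferentiableAt ℝ f x :=
  (cda hO hf hx).differentiableAt (by simp)

lemma fderiv_cdo (hO : IsOpen O) (hf : ContDiffOn ℝ ∞ f O) : ContDiffOn ℝ ∞ (fderiv ℝ f) O :=
  hf.fderiv_of_isOpen hO (by simp)

lemma pd_cdo (hO : IsOpen O) (hf : ContDiffOn ℝ ∞ f O) (i : Fin N) :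
    ContDiffOn ℝ ∞ (pd i f) O :=
  (fderiv_cdo hO hf).clm_apply contDiffOn_const

lemma pd_congr_nhds (h : f =ᶠ[𝓝 x] g) (i : Fin N) : pd i f x = pd i g x := by
  simp only [pd, h.fderiv_eq]

lemma pd_congr (hO : IsOpen O) (h : ∀ y ∈ O, f y = g y) (i : Fin N) :
    ∀ y ∈ O, pd i f y = pd i g y := fun _ hy =>
  pd_congr_nhds (Filter.eventuallyEq_of_mem (hO.mem_nhds hy) h) i

lemma pd_pd_eq (hO : IsOpen O) (hf : ContDiffOn ℝ ∞ f O) (hx : x ∈ O) (i j : Fin N) :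
    pd i (pd j f) x = fderiv ℝ (fderiv ℝ f) x (bv i) (bv j) := by
  have h : DifferentiableAt ℝ (fderiv ℝ f) x :=
    ((fderiv_cdo hO hf).contDiffAt (hO.mem_nhds hx)).differentiableAt (by simp)
  have : HasFDerivAt (fun y => fderiv ℝ f y (bv j)) _ x :=
    h.hasFDerivAt.clm_apply (hasFDerivAt_const (bv j) x)
  unfold pd
  rw [this.fderiv]
  simp

lemma pd_comm (hO : IsOpen O) (hf : ContDiffOn ℝ ∞ f O) (hx : x ∈ O) (i j : Fin N) :
    pd i (pd j f) x = pd j (pd i f) x := by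
  rw [pd_pd_eq hO hf hx, pd_pd_eq hO hf hx]
  exact ((cda hO hf hx).isSymmSndFDerivAt (by simpa using two_le_infty)) _ _

/-- Laplacian through partial derivatives. -/
noncomputable def lap (f : Eu N → ℝ) (x : Eu N) : ℝ := ∑ i, pd i (pd i f) x

lemma laplacian_eq (hO : IsOpen O) (hf : ContDiffOn ℝ ∞ f O) (hx : x ∈ O) :
    laplacian f x = lap f x := by
  unfold laplacian lap
  refine Finset.sum_congr rfl fun i _ => ?_
  rw [pd_pd_eq hO hf hx, iteratedFDeriv_two_apply]
  rfl

lemma pd_sum {ι : Type*} (s : Finset ι) (F : ι → Eu N → ℝ)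
    (h : ∀ i ∈ s, DifferentiableAt ℝ (F i) x) (j : Fin N) :
    pd j (fun y => ∑ i ∈ s, F i y) x = ∑ i ∈ s, pd j (F i) x := by
  unfold pd
  rw [fderiv_fun_sum h]
  simp

lemma lap_cdo (hO : IsOpen O) (hf : ContDiffOn ℝ ∞ f O) : ContDiffOn ℝ ∞ (lap f) O :=
  ContDiffOn.sum fun i _ => pd_cdo hO (pd_cdo hO hf i) i

/-- Laplacian commutes with partial derivatives. -/
lemma lap_pd (hO : IsOpen O) (hf : ContDiffOn ℝ ∞ f O) (hx : x ∈ O) (j : Fin N) :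
    lap (pd j f) x = pd j (lap f) x := by
  have h1 : pd j (lap f) x = ∑ i, pd j (pd i (pd i f)) x :=
    pd_sum _ _ (fun i _ => da hO (pd_cdo hO (pd_cdo hO hf i) i) hx) j
  rw [h1]
  unfold lap
  refine Finset.sum_congr rfl fun i _ => ?_
  rw [pd_comm hO (pd_cdo hO hf i) hx j i]
  exact pd_congr hO (fun y hy => pd_comm hO hf hy i j) i x hx

/-- One-variable restriction. -/
lemma hasDerivAt_line (h : DifferentiableAt ℝ f x) (i : Fin N) {t : ℝ} {z : Eu N}
    (hz : z + t • bv i = x) :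
    HasDerivAt (fun t : ℝ => f (z + t • bv i)) (pd i f x) t := by
  subst hz
  have h1 : HasDerivAt (fun t : ℝ => z + t • (bv i : Eu N)) (bv i) t := by
    simpa using ((hasDerivAt_id t).smul_const (bv i : Eu N)).const_add z
  exact h.hasFDerivAt.comp_hasDerivAt t h1

/-- Second derivative test, necessary version. -/
lemma second_deriv_nonpos {φ φ' : ℝ → ℝ} {c : ℝ} (hmax : IsLocalMax φ 0)
    (h1 : ∀ᶠ t in 𝓝 (0 : ℝ), HasDerivAt φ (φ' t) t) (h2 : HasDerivAt φ' c 0) :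
    φ' 0 = 0 ∧ c ≤ 0 := by
  have h0 : φ' 0 = 0 := hmax.hasDerivAt_eq_zero h1.self_of_nhds
  refine ⟨h0, ?_⟩
  by_contra! hc
  have e : deriv φ =ᶠ[𝓝 0] φ' := h1.mono fun t ht => ht.deriv
  have hd : deriv (deriv φ) 0 = c := by rw [e.deriv_eq, h2.deriv]
  have hmin : IsLocalMin φ 0 := isLocalMin_of_deriv_deriv_pos (by rw [hd]; exact hc)
    (by rw [e.self_of_nhds, h0]) h1.self_of_nhds.continuousAt
  have hconst : φ =ᶠ[𝓝 0] fun _ => φ 0 := by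
    filter_upwards [hmax, hmin] with t a b using le_antisymm a b
  have : deriv φ =ᶠ[𝓝 0] fun _ => 0 := by
    have := hconst.deriv
    simpa using this
  rw [this.deriv_eq] at hd
  simp at hd
  linarith

lemma line_eventually (hO : IsOpen O) (hx : x ∈ O) (i : Fin N) :
    ∀ᶠ t : ℝ in 𝓝 0, x + t • bv i ∈ O := by
  have : ContinuousAt (fun t : ℝ => x + t • (bv i : Eu N)) 0 := by fun_prop
  exact this.eventually_mem (by simpa using hO.mem_nhds hx)

lemma line_hasDeriv (hO : IsOpen O) (hf : ContDiffOn ℝ ∞ f O) (hx : x ∈ O) (i : Fin N) :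
    ∀ᶠ t : ℝ in 𝓝 0, HasDerivAt (fun t : ℝ => f (x + t • bv i)) (pd i f (x + t • bv i)) t := by
  filter_upwards [line_eventually hO hx i] with t ht
  exact hasDerivAt_line (da hO hf ht) i rfl

lemma line_hasDeriv0 (hO : IsOpen O) (hf : ContDiffOn ℝ ∞ f O) (hx : x ∈ O) (i : Fin N) :
    HasDerivAt (fun t : ℝ => f (x + t • bv i)) (pd i f x) 0 :=
  hasDerivAt_line (da hO hf hx) i (by simp)

lemma line_max (i : Fin N) (h : IsLocalMax f x) :
    IsLocalMax (fun t : ℝ => f (x + t • bv i)) 0 := by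
  have : ContinuousAt (fun t : ℝ => x + t • (bv i : Eu N)) 0 := by fun_prop
  have h2 : Filter.Tendsto (fun t : ℝ => x + t • (bv i : Eu N)) (𝓝 0) (𝓝 x) := by
    simpa [ContinuousAt] using this
  have := h2.eventually h
  simpa [IsLocalMax, IsMaxFilter] using this

end HODE

namespace HODE
open scoped ContDiff Topology

lemma exists_a (n p : ℝ) (hn : 2 ≤ n) (hp : 1 < p) (hsub : (n - 2) * p < n + 2) :
    ∃ a : ℝ, 1 < a ∧ (n - 1) * p < a * (n + 2) ∧ a * (n - 2) < n - 1 ∧ 2 * a < p + 1 := by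
  have h0 : (0 : ℝ) < n + 2 := by linarith
  have e1 : (n - 1) * p / (n + 2) < (p + 1) / 2 := by
    rw [div_lt_div_iff₀ h0 (by norm_num)]; nlinarith
  have e2 : (1 : ℝ) < (p + 1) / 2 := by linarith
  rcases hn.eq_or_lt with h | h
  · obtain ⟨a, ha1, ha2⟩ := exists_between (max_lt e2 e1)
    have := (le_max_left _ _).trans_lt ha1
    have h3 := (le_max_right _ _).trans_lt ha1
    rw [div_lt_iff₀ h0] at h3
    exact ⟨a, this, h3, by rw [← h]; norm_num, by linarith⟩
  · have hn2 : 0 < n - 2 := by linarith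
    have e3 : (1 : ℝ) < (n - 1) / (n - 2) := by rw [lt_div_iff₀ hn2]; linarith
    have e4 : (n - 1) * p / (n + 2) < (n - 1) / (n - 2) := by
      rw [div_lt_div_iff₀ h0 hn2]; nlinarith
    obtain ⟨a, ha1, ha2⟩ := exists_between (lt_min (max_lt e2 e1) (max_lt e3 e4))
    have := (le_max_left _ _).trans_lt ha1
    have h3 := (le_max_right _ _).trans_lt ha1
    rw [div_lt_iff₀ h0] at h3
    have h4 := ha2.trans_le (min_le_left _ _)
    have h5 := ha2.trans_le (min_le_right _ _)
    rw [lt_div_iff₀ hn2] at h5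
    exact ⟨a, this, h3, h5, by linarith⟩

lemma exists_params (n p : ℝ) (hn : 2 ≤ n) (hp : 1 < p) (hsub : (n - 2) * p < n + 2) :
    ∃ γ d α : ℝ, γ < 0 ∧ 0 < d ∧ 0 < γ + (p - 1) ∧ d * (γ + (p - 1)) < 2 / n ∧
      0 < (1 - α) * γ - α ^ 2 + (1 + α) ^ 2 / n - γ ^ 2 / 2 - γ / 2 ∧
      0 < (1 - α) * (d * (γ + (p - 1))) + d * (p - 1) * (p - 1 - 1) / 2 - d * (γ ^ 2 + γ) / 2
        + (2 * (1 + α) / n + 1 - γ / 2) - p := by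
  obtain ⟨a, ha1, ha2, ha3, ha4⟩ := exists_a n p hn hp hsub
  have hn0 : 0 < n := by linarith
  have hn1 : 0 < n - 1 := by linarith
  set α : ℝ := n * a / (n - 1) - 1 with hα
  set γ : ℝ := 2 - 2 * a with hγ
  have hgs : 0 < γ + (p - 1) := by rw [hγ]; linarith
  set m : ℝ := (1 - α) + (p - 1 - γ - 1) / 2 with hm
  set κ : ℝ := (a * (n + 2) - (n - 1) * p) / n with hκ
  have hκ0 : 0 < κ := by rw [hκ]; apply div_pos _ hn0; linarith
  set ε : ℝ := min (1 / n) (κ / (2 * (|m| + 1))) with hε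
  have hε0 : 0 < ε := by
    rw [hε]; apply lt_min (by positivity); positivity
  set e : ℝ := 2 / n - ε with he
  have he0 : 0 < e := by
    have : ε ≤ 1 / n := min_le_left _ _
    have h2 : 2 / n = 1 / n + 1 / n := by ring
    have : 0 < 1 / n := by positivity
    rw [he]; linarith
  refine ⟨γ, e / (γ + (p - 1)), α, by rw [hγ]; linarith, by positivity, hgs, ?_, ?_, ?_⟩
  · rw [div_mul_cancel₀ _ hgs.ne']; rw [he]; linarith
  · have : (1 - α) * γ - α ^ 2 + (1 + α) ^ 2 / n - γ ^ 2 / 2 - γ / 2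
      = a * ((n - 1) - a * (n - 2)) / (n - 1) := by
      rw [hα, hγ]; field_simp; ring
    rw [this]
    apply div_pos _ hn1
    apply mul_pos (by linarith); linarith
  · have h1 : e / (γ + (p - 1)) * (p - 1) * (p - 1 - 1) / 2
        - e / (γ + (p - 1)) * (γ ^ 2 + γ) / 2 = e * ((p - 1 - γ - 1) / 2) := by
      field_simp; ring
    rw [div_mul_cancel₀ _ hgs.ne']
    have h2 : (2 / n) * m + (2 * (1 + α) / n + 1 - γ / 2) - p = κ := by
      rw [hκ, hm, hα, hγ]; field_simp; ring
    have h3 : ε * m ≤ κ / 2 := by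
      have h4 : ε ≤ κ / (2 * (|m| + 1)) := min_le_right _ _
      have h5 : ε * m ≤ ε * (|m| + 1) := by
        apply mul_le_mul_of_nonneg_left _ hε0.le
        linarith [le_abs_self m]
      have h6 : ε * (|m| + 1) ≤ κ / (2 * (|m| + 1)) * (|m| + 1) := by gcongr
      have h7 : κ / (2 * (|m| + 1)) * (|m| + 1) = κ / 2 := by
        have : |m| + 1 ≠ 0 := by positivity
        field_simp
      linarith
    have h8 : (1 - α) * e + e * ((p - 1 - γ - 1) / 2) = (2 / n) * m - ε * m := by
      rw [he, hm]; ring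
    linarith

lemma compare (s θ : ℝ) (hs : 0 < s) (hθ : 0 < θ) :
    ∃ K : ℝ, 0 ≤ K ∧ ∀ u δ : ℝ, 0 ≤ u → 0 < δ → δ ≤ 1 →
      (u + δ) ^ s - u ^ s ≤ θ * u ^ s + K ∧ u ^ s ≤ (u + δ) ^ s ∧
      u ^ (s + 1) / (u + δ) ≤ u ^ s ∧ u ^ s - u ^ (s + 1) / (u + δ) ≤ θ * u ^ s + K := by
  have hc : ContinuousAt (fun x : ℝ => (1 + x) ^ s) 0 := by
    apply ContinuousAt.rpow_const (by fun_prop); simp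
  have h1 : ∀ᶠ x : ℝ in 𝓝 0, (1 + x) ^ s < 1 + θ := by
    apply hc.eventually_lt continuousAt_const; simp [hθ]
  have h2 : ∀ᶠ x : ℝ in 𝓝 0, x < θ := eventually_lt_nhds hθ
  obtain ⟨x, ⟨hx1, hx2⟩, hx0⟩ :=
    (((h1.and h2).filter_mono (nhdsWithin_le_nhds (s := Set.Ioi 0))).and
      self_mem_nhdsWithin).exists
  have hx0 : 0 < x := hx0
  refine ⟨(1 / x + 1) ^ s, by positivity, fun u δ hu hδ hδ1 => ?_⟩
  have hus : 0 ≤ u ^ s := by positivity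
  have hpow : u ^ (s + 1) = u ^ s * u := by
    rw [Real.rpow_add_one' hu (by linarith)]
  have hge : u ^ s ≤ (u + δ) ^ s := by gcongr; linarith
  have hv : 0 < u + δ := by linarith
  have hg1 : u ^ (s + 1) / (u + δ) ≤ u ^ s := by
    rw [hpow, div_le_iff₀ hv]; nlinarith
  have hK : 0 ≤ (1 / x + 1) ^ s := by positivity
  have hg0 : 0 ≤ u ^ (s + 1) / (u + δ) := by positivity
  rcases le_or_gt u (1 / x) with h | h
  · have h3 : (u + δ) ^ s ≤ (1 / x + 1) ^ s := by gcongr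
    have h4 : 0 ≤ θ * u ^ s := by positivity
    exact ⟨by linarith, hge, hg1, by linarith⟩
  · have hxu : 1 < x * u := by rw [div_lt_iff₀ hx0] at h; linarith
    have h3 : (u + δ) ^ s ≤ (1 + x) ^ s * u ^ s := by
      rw [← Real.mul_rpow (by linarith) hu]
      gcongr; nlinarith
    have h4 : (1 + x) ^ s * u ^ s ≤ (1 + θ) * u ^ s := by gcongr
    refine ⟨by linarith, hge, hg1, ?_⟩
    have h5 : u ^ s - u ^ (s + 1) / (u + δ) = u ^ s * (δ / (u + δ)) := by
      rw [hpow]; field_simp; ring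
    have h6 : δ / (u + δ) ≤ θ := by
      rw [div_le_iff₀ hv]; nlinarith
    have h7 : u ^ s * (δ / (u + δ)) ≤ u ^ s * θ := by gcongr
    rw [h5]; linarith

set_option maxHeartbeats 1000000 in
/-- The scalar inequality at the heart of the Bernstein argument. -/
lemma scalar_bound (n p γ d α : ℝ) (hn : 2 ≤ n) (hp : 1 < p) (hd : 0 < d)
    (hgs : 0 < γ + (p - 1)) (he : d * (γ + (p - 1)) < 2 / n)
    (hc1 : 0 < (1 - α) * γ - α ^ 2 + (1 + α) ^ 2 / n - γ ^ 2 / 2 - γ / 2)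
    (hκ : 0 < (1 - α) * (d * (γ + (p - 1))) + d * (p - 1) * (p - 1 - 1) / 2
      - d * (γ ^ 2 + γ) / 2 + (2 * (1 + α) / n + 1 - γ / 2) - p) :
    ∃ C : ℝ, 0 < C ∧ ∀ u δ F S H X Ξ z : ℝ, 0 ≤ u → 0 < δ → δ ≤ 1 → 0 ≤ F → 1 ≤ z →
      X ^ 2 ≤ 16 * F * z → Ξ ≤ 16 * z →
      2 * S + d * (p - 1) * (u + δ) ^ (p - 1) * F
        = (F + d * (u + δ) ^ (p - 1)) * (X - γ * F) →
      γ * (-(u ^ p / (u + δ)) - F) * (F + d * (u + δ) ^ (p - 1)) + 2 * H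
        - 2 * (p * u ^ (p - 1) - u ^ p / (u + δ)) * F - 4 * S
        + d * (p - 1) * (u + δ) ^ (p - 1) * ((p - 1) * F - u ^ p / (u + δ) - F)
        - (F + d * (u + δ) ^ (p - 1)) * (Ξ - 2 * γ * X + γ ^ 2 * F)
        ≤ (4 * n + 8) * z * (F + d * (u + δ) ^ (p - 1)) →
      2 * α * S - α ^ 2 * F ^ 2 + (-(u ^ p / (u + δ)) - F - α * F) ^ 2 / n ≤ H →
      F + d * (u + δ) ^ (p - 1) ≤ C * z := by
  set s := p - 1 with hs
  have hs0 : 0 < s := by rw [hs]; linarith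
  set e := d * (γ + s) with he'
  set c1 := (1 - α) * γ - α ^ 2 + (1 + α) ^ 2 / n - γ ^ 2 / 2 - γ / 2 with hc1'
  set c2 := (1 - α) * e + d * s * (s - 1) / 2 - d * (γ ^ 2 + γ) / 2 with hc2
  set c3 := 2 * (1 + α) / n + 1 - γ / 2 with hc3
  set κ := c2 + c3 - p with hκ'
  set om := 1 / n - e / 2 with hom
  have hn0 : 0 < n := by linarith
  have hom0 : 0 < om := by
    have : 2 / n = 2 * (1 / n) := by ring
    rw [hom]; linarith
  have he0 : 0 < e := by positivity
  set c := |c2| + |c3| with hc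
  set c4 := 2 / n + e / 2 with hc4
  have hc40 : 0 < c4 := by positivity
  set c5 := |γ| + |α - 1| with hc5
  have hc0 : 0 ≤ c := by positivity
  have hc50 : 0 ≤ c5 := by positivity
  obtain ⟨θ, hθ0, hθ1, hθ2, hθ3⟩ : ∃ θ : ℝ, 0 < θ ∧ θ ≤ 1 ∧ c * θ ≤ κ / 4 ∧ c4 * θ ≤ om / 2 := by
    refine ⟨min 1 (min (κ / (4 * (c + 1))) (om / (2 * c4))), ?_, min_le_left _ _, ?_, ?_⟩
    · positivity
    · calc c * min 1 (min (κ / (4 * (c + 1))) (om / (2 * c4)))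
          ≤ (c + 1) * (κ / (4 * (c + 1))) := by
            apply mul_le_mul (by linarith) _ (by positivity) (by positivity)
            exact (min_le_right _ _).trans (min_le_left _ _)
        _ = κ / 4 := by field_simp
    · calc c4 * min 1 (min (κ / (4 * (c + 1))) (om / (2 * c4)))
          ≤ c4 * (om / (2 * c4)) := by
            apply mul_le_mul_of_nonneg_left _ hc40.le
            exact (min_le_right _ _).trans (min_le_right _ _)
        _ = om / 2 := by field_simp
  obtain ⟨θ', hθ'0, hθ'1, hθ'2⟩ : ∃ θ : ℝ, 0 < θ ∧ c5 * θ ≤ c1 / 2 ∧ c5 * θ * (2 * d) ≤ κ / 4 := by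
    refine ⟨min (c1 / (2 * (c5 + 1))) (κ / (8 * d * (c5 + 1))), ?_, ?_, ?_⟩
    · positivity
    · calc c5 * min (c1 / (2 * (c5 + 1))) (κ / (8 * d * (c5 + 1)))
          ≤ (c5 + 1) * (c1 / (2 * (c5 + 1))) := by
            apply mul_le_mul (by linarith) (min_le_left _ _) (by positivity) (by positivity)
        _ = c1 / 2 := by field_simp
    · calc c5 * min (c1 / (2 * (c5 + 1))) (κ / (8 * d * (c5 + 1))) * (2 * d)
          ≤ (c5 + 1) * (κ / (8 * d * (c5 + 1))) * (2 * d) := by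
            apply mul_le_mul_of_nonneg_right _ (by positivity)
            apply mul_le_mul (by linarith) (min_le_right _ _) (by positivity) (by positivity)
        _ = κ / 4 := by field_simp; norm_num
  obtain ⟨K, hK0, hK⟩ := compare s θ hs0 hθ0
  set A := 2 * n + 4 + 8 + 4 * c5 / θ' with hA
  have hA0 : 0 < A := by positivity
  set K7 := c * K + c4 * K + c1 * d * K + A * (1 + 2 * d + d * K) with hK7
  have hK70 : 0 < K7 := by positivity
  set m := min c1 om / 4 with hm
  have hm0 : 0 < m := by positivity
  set C8 := 1 + 2 * K7 / m with hC8
  have hC80 : 0 < C8 := by positivity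
  refine ⟨(1 + 2 * d) * C8 + d * K, by positivity, ?_⟩
  intro u δ F S H X Ξ z hu hδ hδ1 hF hz hX hΞ h1 h2 h3
  obtain ⟨hr1, hr1', hr2', hr2⟩ := hK u δ hu hδ hδ1
  have hsp : s + 1 = p := by rw [hs]; ring
  rw [hsp] at hr2 hr2'
  have hg0 : 0 ≤ u ^ p / (u + δ) := by positivity
  have hU0 : 0 ≤ u ^ s := by positivity
  generalize u ^ p / (u + δ) = g at *
  generalize (u + δ) ^ s = G at *
  generalize u ^ s = U at *
  set Q := F + d * G with hQ
  have hQ0 : 0 ≤ Q := by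
    have := mul_nonneg hd.le (hU0.trans hr1')
    rw [hQ]; linarith
  -- bound for X
  have hXabs : |X| ≤ θ' * F + 4 / θ' * z := by
    apply abs_le_of_sq_le_sq _ (by positivity)
    have : 16 * F * z ≤ (θ' * F + 4 / θ' * z) ^ 2 := by
      have h : (θ' * F + 4 / θ' * z) ^ 2 = (θ' * F - 4 / θ' * z) ^ 2 + 16 * F * z := by
        field_simp; ring
      rw [h]; linarith [sq_nonneg (θ' * F - 4 / θ' * z)]
    linarith
  -- main inequality
  have hstar : c1 * F ^ 2 + F * (c2 * G + c3 * g - p * U) + g ^ 2 / n - e / 2 * (g * G)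
      ≤ Q * ((2 * n + 4) * z + Ξ / 2 - γ * X - (α - 1) * X) := by
    have hS : S = (Q * (X - γ * F) - d * s * G * F) / 2 := by linarith
    have key : c1 * F ^ 2 + F * (c2 * G + c3 * g - p * U) + g ^ 2 / n - e / 2 * (g * G)
        - Q * ((2 * n + 4) * z + Ξ / 2 - γ * X - (α - 1) * X)
        = (γ * (-g - F) * Q + 2 * (2 * α * S - α ^ 2 * F ^ 2 + (-g - F - α * F) ^ 2 / n)
          - 2 * (p * U - g) * F - 4 * S + d * s * G * (s * F - g - F)
          - Q * (Ξ - 2 * γ * X + γ ^ 2 * F) - (4 * n + 8) * z * Q) / 2 := by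
      rw [hS, hc1', hc2, hc3, he', hQ]
      field_simp
      ring
    linarith
  have hXb : -γ * X - (α - 1) * X ≤ c5 * (θ' * F + 4 / θ' * z) := by
    have a1 : -γ * X ≤ |γ| * |X| := by
      rw [← abs_mul, neg_mul]; exact neg_le_abs _
    have a2 : -((α - 1) * X) ≤ |α - 1| * |X| := by
      rw [← abs_mul]; exact neg_le_abs _
    have a3 : c5 * |X| ≤ c5 * (θ' * F + 4 / θ' * z) := by gcongr
    have a4 : c5 * |X| = |γ| * |X| + |α - 1| * |X| := by rw [hc5]; ring
    linarith
  have hR : Q * ((2 * n + 4) * z + Ξ / 2 - γ * X - (α - 1) * X) ≤ Q * (A * z + c5 * θ' * F) := by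
    apply mul_le_mul_of_nonneg_left _ hQ0
    have : A * z = (2 * n + 4) * z + 8 * z + c5 * (4 / θ' * z) := by rw [hA]; ring
    rw [this]
    linarith
  obtain ⟨r1, hr1e⟩ : ∃ r1, r1 = G - U := ⟨_, rfl⟩
  obtain ⟨r2, hr2e⟩ : ∃ r2, r2 = U - g := ⟨_, rfl⟩
  have hG : G = U + r1 := by linarith
  have hg : g = U - r2 := by linarith
  have b1 : 0 ≤ r1 := by linarith
  have b2 : 0 ≤ r2 := by linarith
  have b3 : r1 ≤ θ * U + K := by linarith
  have b4 : r2 ≤ θ * U + K := by linarith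
  have hlow : c1 * F ^ 2 + (κ - c * θ) * (F * U) - c * K * F + (om - c4 * θ) * U ^ 2 - c4 * K * U
      ≤ c1 * F ^ 2 + F * (c2 * G + c3 * g - p * U) + g ^ 2 / n - e / 2 * (g * G) := by
    have d1 : -(c * (θ * U + K)) ≤ c2 * r1 - c3 * r2 := by
      have x1 : |c2 * r1| ≤ |c2| * (θ * U + K) := by
        rw [abs_mul, abs_of_nonneg b1]; gcongr
      have x2 : |c3 * r2| ≤ |c3| * (θ * U + K) := by
        rw [abs_mul, abs_of_nonneg b2]; gcongr
      have x3 := neg_abs_le (c2 * r1)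
      have x4 := le_abs_self (c3 * r2)
      have x5 : c * (θ * U + K) = |c2| * (θ * U + K) + |c3| * (θ * U + K) := by rw [hc]; ring
      linarith
    have d1' := mul_le_mul_of_nonneg_left d1 hF
    have d2 : U ^ 2 - 2 * U * (θ * U + K) ≤ g ^ 2 := by
      rw [hg]; linarith [mul_le_mul_of_nonneg_left b4 hU0, sq_nonneg r2]
    have d3 : g * G ≤ U ^ 2 + U * (θ * U + K) := by
      have : g * G ≤ U * G := mul_le_mul_of_nonneg_right hr2' (by linarith)
      rw [hG] at this
      rw [hG]
      linarith [mul_le_mul_of_nonneg_left b3 hU0]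
    have d2' : (U ^ 2 - 2 * U * (θ * U + K)) / n ≤ g ^ 2 / n := by gcongr
    have d3' : e / 2 * (g * G) ≤ e / 2 * (U ^ 2 + U * (θ * U + K)) := by gcongr
    have d4 : c2 * G + c3 * g - p * U = κ * U + (c2 * r1 - c3 * r2) := by
      rw [hG, hg, hκ']; ring
    rw [d4]
    have d5 : (om - c4 * θ) * U ^ 2 - c4 * K * U
        = (U ^ 2 - 2 * U * (θ * U + K)) / n - e / 2 * (U ^ 2 + U * (θ * U + K)) := by
      rw [hom, hc4]; ring
    have d6 : (κ - c * θ) * (F * U) - c * K * F = F * (κ * U) + F * (-(c * (θ * U + K))) := by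
      ring
    have d7 : F * (κ * U + (c2 * r1 - c3 * r2)) = F * (κ * U) + F * (c2 * r1 - c3 * r2) := by ring
    rw [d7]
    linarith
  have hQle : Q ≤ F + 2 * d * U + d * K := by
    rw [hQ]
    have : G ≤ 2 * U + K := by linarith [mul_le_mul_of_nonneg_right hθ1 hU0]
    linarith [mul_le_mul_of_nonneg_left this hd.le]
  have hQF : Q * (c5 * θ' * F) ≤ c1 / 2 * F ^ 2 + κ / 4 * (F * U) + c1 * d * K * F := by
    have q0 : 0 ≤ c5 * θ' * F := by positivity
    have q1 : Q * (c5 * θ' * F) ≤ (F + 2 * d * U + d * K) * (c5 * θ' * F) := by gcongr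
    have q2 : c5 * θ' * F ^ 2 ≤ c1 / 2 * F ^ 2 := by gcongr
    have q3 : c5 * θ' * (2 * d) * (F * U) ≤ κ / 4 * (F * U) := by gcongr
    have q4 : c5 * θ' * (d * K * F) ≤ c1 * (d * K * F) := by
      gcongr; linarith
    linarith
  have hQz : Q * (A * z) ≤ (F + 2 * d * U + d * K) * (A * z) := by gcongr
  have hFU : 0 ≤ F * U := by positivity
  have hmain : m * (F + U) ^ 2 ≤ z * K7 * (F + U + 1) := by
    have m1 : m ≤ c1 / 4 := by rw [hm]; linarith [min_le_left c1 om]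
    have m2 : m ≤ om / 4 := by rw [hm]; linarith [min_le_right c1 om]
    have m3 : m * (F + U) ^ 2 ≤ c1 / 2 * F ^ 2 + om / 2 * U ^ 2 := by
      have : (F + U) ^ 2 ≤ 2 * F ^ 2 + 2 * U ^ 2 := by linarith [sq_nonneg (F - U)]
      calc m * (F + U) ^ 2 ≤ m * (2 * F ^ 2 + 2 * U ^ 2) := by gcongr
        _ = m * (2 * F ^ 2) + m * (2 * U ^ 2) := by ring
        _ ≤ c1 / 4 * (2 * F ^ 2) + om / 4 * (2 * U ^ 2) := by gcongr
        _ = _ := by ring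
    have m4 : 0 ≤ (κ - c * θ - κ / 4) * (F * U) := by
      apply mul_nonneg _ hFU
      have : 0 < κ := hκ
      linarith
    have m5 : om / 2 * U ^ 2 ≤ (om - c4 * θ) * U ^ 2 := by
      gcongr; linarith
    have m6 : c1 / 2 * F ^ 2 + om / 2 * U ^ 2 ≤ c * K * F + c4 * K * U + c1 * d * K * F
        + (F + 2 * d * U + d * K) * (A * z) := by
      linarith
    have m7 : c * K * F + c4 * K * U + c1 * d * K * F ≤
        z * (c * K + c4 * K + c1 * d * K) * (F + U + 1) := by
      have y0 : c * K * F + c4 * K * U + c1 * d * K * F ≤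
        (c * K + c4 * K + c1 * d * K) * (F + U + 1) := by
        have y1 : 0 ≤ c * K := by positivity
        have y2 : 0 ≤ c4 * K := by positivity
        have y3 : 0 ≤ c1 * d * K := by positivity
        linarith [mul_nonneg y1 hU0, mul_nonneg y2 hF, mul_nonneg y3 hU0]
      have y4 : 0 ≤ (c * K + c4 * K + c1 * d * K) * (F + U + 1) := by positivity
      linarith [mul_le_mul_of_nonneg_right hz y4]
    have m8 : (F + 2 * d * U + d * K) * (A * z) ≤ z * (A * (1 + 2 * d + d * K)) * (F + U + 1) := by
      have y1 : F + 2 * d * U + d * K ≤ (1 + 2 * d + d * K) * (F + U + 1) := by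
        have : 0 ≤ d * K := by positivity
        linarith [mul_nonneg hd.le hF, mul_nonneg hd.le hU0, mul_nonneg this hF,
          mul_nonneg this hU0]
      calc (F + 2 * d * U + d * K) * (A * z) ≤ ((1 + 2 * d + d * K) * (F + U + 1)) * (A * z) := by
            gcongr
        _ = _ := by ring
    calc m * (F + U) ^ 2 ≤ z * (c * K + c4 * K + c1 * d * K) * (F + U + 1)
          + z * (A * (1 + 2 * d + d * K)) * (F + U + 1) := by linarith
      _ = z * K7 * (F + U + 1) := by rw [hK7]; ring
  have hY : F + U ≤ C8 * z := by
    rcases le_or_gt (F + U) 1 with h | h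
    · have : 1 ≤ C8 := by rw [hC8]; have : 0 < 2 * K7 / m := by positivity
                          linarith
      linarith [mul_le_mul this hz zero_le_one hC80.le]
    · have h5 : m * (F + U) ≤ 2 * (z * K7) := by
        have : m * (F + U) * (F + U) ≤ 2 * (z * K7) * (F + U) := by
          have : z * K7 * (F + U + 1) ≤ z * K7 * (2 * (F + U)) := by
            gcongr; linarith
          linarith
        exact le_of_mul_le_mul_right this (by linarith)
      have h6 : F + U ≤ 2 * K7 / m * z := by
        rw [div_mul_eq_mul_div, le_div_iff₀ hm0]; linarith
      rw [hC8]; linarith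
  have hU : U ≤ C8 * z := by linarith
  have : 2 * d * U ≤ 2 * d * (C8 * z) := by gcongr
  have : d * K ≤ d * K * z := by
    have : 0 ≤ d * K := by positivity
    linarith [mul_le_mul_of_nonneg_left hz this]
  linarith

end HODE

namespace HODE
open scoped ContDiff Topology

variable {N : ℕ} {O : Set (Eu N)} {f g : Eu N → ℝ} {x : Eu N}

lemma pd_of {f' : Eu N →L[ℝ] ℝ} (h : HasFDerivAt f f' x) (i : Fin N) : pd i f x = f' (bv i) := by
  rw [pd, h.fderiv]

/-- Conditions at a local maximum of `γ w + log Q + 2 log Z`. -/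
lemma max_cond (hO : IsOpen O) (hx : x ∈ O) {w Q Z : Eu N → ℝ} (γ : ℝ)
    (hw : ContDiffOn ℝ ∞ w O) (hQ : ContDiffOn ℝ ∞ Q O) (hZ : ContDiffOn ℝ ∞ Z O)
    (hQ0 : ∀ y ∈ O, 0 < Q y) (hZ0 : 0 < Z x)
    (hmax : IsLocalMax (fun y => γ * w y + Real.log (Q y) + 2 * Real.log (Z y)) x) (i : Fin N) :
    γ * pd i w x + pd i Q x / Q x + 2 * (pd i Z x / Z x) = 0 ∧
    γ * pd i (pd i w) x + (pd i (pd i Q) x / Q x - (pd i Q x / Q x) ^ 2)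
      + 2 * (pd i (pd i Z) x / Z x - (pd i Z x / Z x) ^ 2) ≤ 0 := by
  have hm := line_max i hmax
  have hZc : ∀ᶠ t : ℝ in 𝓝 0, 0 < Z (x + t • bv i) := by
    have h := (line_hasDeriv0 hO hZ hx i).continuousAt
    have h2 := h.eventually (lt_mem_nhds (a := 0) (by simpa using hZ0))
    exact h2
  have h1 : ∀ᶠ t : ℝ in 𝓝 0, HasDerivAt
      (fun t : ℝ => γ * w (x + t • bv i) + Real.log (Q (x + t • bv i))
        + 2 * Real.log (Z (x + t • bv i)))
      ((fun t : ℝ => γ * pd i w (x + t • bv i) + pd i Q (x + t • bv i) / Q (x + t • bv i)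
        + 2 * (pd i Z (x + t • bv i) / Z (x + t • bv i))) t) t := by
    filter_upwards [line_hasDeriv hO hw hx i, line_hasDeriv hO hQ hx i, line_hasDeriv hO hZ hx i,
      line_eventually hO hx i, hZc] with t a1 a2 a3 a4 a5
    exact ((a1.const_mul γ).add (a2.log (hQ0 _ a4).ne')).add ((a3.log a5.ne').const_mul 2)
  have b1 := line_hasDeriv0 hO (pd_cdo hO hw i) hx i
  have b2 := line_hasDeriv0 hO (pd_cdo hO hQ i) hx i
  have b3 := line_hasDeriv0 hO (pd_cdo hO hZ i) hx i
  have c2 := line_hasDeriv0 hO hQ hx i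
  have c3 := line_hasDeriv0 hO hZ hx i
  have hq : Q x ≠ 0 := (hQ0 x hx).ne'
  have hz : Z x ≠ 0 := hZ0.ne'
  have h2 := ((b1.const_mul γ).add (b2.div c2 (by simpa using hq))).add
    ((b3.div c3 (by simpa using hz)).const_mul 2)
  obtain ⟨e1, e2⟩ := second_deriv_nonpos hm h1 h2
  simp only [zero_smul, add_zero] at e1 e2
  refine ⟨e1, ?_⟩
  convert e2 using 1
  field_simp

lemma sum_coord_sq (y : Eu N) : ∑ i, (y i) ^ 2 = ‖y‖ ^ 2 := by
  rw [EuclideanSpace.norm_sq_eq]; simp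

/-- cutoff -/
noncomputable def Zc (c y : Eu N) : ℝ := 1 - ∑ i, (y i - c i) ^ 2

lemma Zc_cdo (c : Eu N) : ContDiffOn ℝ ∞ (Zc c) O := by
  unfold Zc
  apply ContDiff.contDiffOn
  fun_prop

lemma coord_hasFDerivAt (i : Fin N) (y : Eu N) :
    HasFDerivAt (fun y : Eu N => y i) (EuclideanSpace.proj i : Eu N →L[ℝ] ℝ) y :=
  (EuclideanSpace.proj i : Eu N →L[ℝ] ℝ).hasFDerivAt

lemma pd_Zc (c y : Eu N) (i : Fin N) : pd i (Zc c) y = -2 * (y i - c i) := by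
  have h : HasFDerivAt (Zc c) (-(∑ j, (2 * (y j - c j)) • (EuclideanSpace.proj j : Eu N →L[ℝ] ℝ))) y := by
    unfold Zc
    apply HasFDerivAt.const_sub
    apply HasFDerivAt.fun_sum
    intro j _
    have := ((coord_hasFDerivAt j y).sub_const (c j)).pow 2
    simpa using this
  rw [pd_of h]
  simp [bv_apply]

lemma pd_pd_Zc (c y : Eu N) (i : Fin N) : pd i (pd i (Zc c)) y = -2 := by
  have h : pd i (Zc c) = fun y => -2 * (y i - c i) := funext fun y => pd_Zc c y i
  rw [h, pd_of (((coord_hasFDerivAt i y).sub_const (c i)).const_mul (-2))]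
  simp [bv_apply]

/-- The Bernstein quantity `|∇w|² + d e^{sw}`. -/
noncomputable def Qf (d s : ℝ) (w : Eu N → ℝ) (y : Eu N) : ℝ :=
  ∑ j, (pd j w y) ^ 2 + d * Real.exp (s * w y)

lemma Qf_cdo (hO : IsOpen O) {w : Eu N → ℝ} (hw : ContDiffOn ℝ ∞ w O) (d s : ℝ) :
    ContDiffOn ℝ ∞ (Qf d s w) O := by
  unfold Qf
  refine ContDiffOn.add (ContDiffOn.sum fun j _ => (pd_cdo hO hw j).pow 2) ?_
  exact contDiffOn_const.mul (contDiffOn_const.mul hw).exp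

lemma pd_Qf (hO : IsOpen O) {w : Eu N → ℝ} (hw : ContDiffOn ℝ ∞ w O) (d s : ℝ) (i : Fin N)
    {y : Eu N} (hy : y ∈ O) :
    pd i (Qf d s w) y = ∑ j, 2 * (pd j w y * pd i (pd j w) y)
      + d * s * (Real.exp (s * w y) * pd i w y) := by
  have h1 : ∀ j ∈ Finset.univ, HasFDerivAt (fun y => (pd j w y) ^ 2) _ y := fun j _ =>
    (da hO (pd_cdo hO hw j) hy).hasFDerivAt.pow 2
  have h2 := ((da hO hw hy).hasFDerivAt.const_mul s).exp.const_mul d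
  have h := (HasFDerivAt.fun_sum h1).add h2
  have h' : HasFDerivAt (Qf d s w) _ y := h
  rw [pd_of h']
  simp only [pd, add_apply, sum_apply, smul_apply,
    smul_eq_mul]
  congr 1
  · refine Finset.sum_congr rfl fun j _ => ?_
    simp
    ring
  · ring

lemma pd_pd_Qf (hO : IsOpen O) {w : Eu N → ℝ} (hw : ContDiffOn ℝ ∞ w O) (d s : ℝ) (i : Fin N)
    {y : Eu N} (hy : y ∈ O) :
    pd i (pd i (Qf d s w)) y =
      ∑ j, 2 * ((pd i (pd j w) y) ^ 2 + pd j w y * pd i (pd i (pd j w)) y)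
      + d * s * (Real.exp (s * w y) * (s * (pd i w y) ^ 2 + pd i (pd i w) y)) := by
  rw [pd_congr hO (fun z hz => pd_Qf hO hw d s i hz) i y hy]
  have h1 : ∀ j ∈ Finset.univ, HasFDerivAt (fun y => 2 * (pd j w y * pd i (pd j w) y)) _ y :=
    fun j _ => ((da hO (pd_cdo hO hw j) hy).hasFDerivAt.mul
      (da hO (pd_cdo hO (pd_cdo hO hw j) i) hy).hasFDerivAt).const_mul 2
  have h2 := ((((da hO hw hy).hasFDerivAt.const_mul s).exp).mul
    (da hO (pd_cdo hO hw i) hy).hasFDerivAt).const_mul (d * s)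
  have h := (HasFDerivAt.fun_sum h1).add h2
  refine (pd_of h i).trans ?_
  simp only [add_apply, sum_apply, smul_apply,
    smul_eq_mul]
  have e : ∀ (f : Eu N → ℝ) (y : Eu N), fderiv ℝ f y (bv i) = pd i f y := fun _ _ => rfl
  simp only [e]
  congr 1
  · refine Finset.sum_congr rfl fun j _ => ?_
    ring
  · ring

section w
variable {u : Eu N → ℝ} {p δ : ℝ}

/-- `log (u + δ)` -/
noncomputable def wf (u : Eu N → ℝ) (δ : ℝ) (y : Eu N) : ℝ := Real.log (u y + δ)

lemma wf_cdo (hu : ContDiffOn ℝ ∞ u O) (h0 : ∀ y ∈ O, 0 ≤ u y) (hδ : 0 < δ) :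
    ContDiffOn ℝ ∞ (wf u δ) O :=
  (hu.add contDiffOn_const).log fun y hy => by have := h0 y hy; positivity

lemma pd_wf (hO : IsOpen O) (hu : ContDiffOn ℝ ∞ u O) (h0 : ∀ y ∈ O, 0 ≤ u y) (hδ : 0 < δ)
    (i : Fin N) {y : Eu N} (hy : y ∈ O) : pd i (wf u δ) y = pd i u y / (u y + δ) := by
  have hv : u y + δ ≠ 0 := by have := h0 y hy; positivity
  have h : HasFDerivAt (wf u δ) _ y := ((da hO hu hy).hasFDerivAt.add_const δ).log hv
  rw [pd_of h]
  simp only [smul_apply, smul_eq_mul]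
  rw [pd]; ring

lemma pd_div (hf : DifferentiableAt ℝ f x) (hg : DifferentiableAt ℝ g x) (h0 : g x ≠ 0)
    (i : Fin N) :
    pd i (fun y => f y / g y) x = (pd i f x * g x - f x * pd i g x) / g x ^ 2 := by
  have hd : DifferentiableAt ℝ (fun y => f y / g y) x := by
    simpa [div_eq_mul_inv] using! hf.mul (hg.inv h0)
  have h1 := hasDerivAt_line hd i (t := 0) (z := x) (by simp)
  have h2 := (hasDerivAt_line hf i (t := 0) (z := x) (by simp)).div
    (hasDerivAt_line hg i (t := 0) (z := x) (by simp)) (by simpa using h0)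
  have := h1.unique h2
  simpa using this

lemma pd_pd_wf (hO : IsOpen O) (hu : ContDiffOn ℝ ∞ u O) (h0 : ∀ y ∈ O, 0 ≤ u y) (hδ : 0 < δ)
    (i : Fin N) {y : Eu N} (hy : y ∈ O) :
    pd i (pd i (wf u δ)) y = pd i (pd i u) y / (u y + δ) - (pd i (wf u δ) y) ^ 2 := by
  rw [pd_congr hO (fun z hz => pd_wf hO hu h0 hδ i hz) i y hy, pd_wf hO hu h0 hδ i hy]
  have hv : u y + δ ≠ 0 := by have := h0 y hy; positivity
  rw [pd_div (da hO (pd_cdo hO hu i) hy) ((da hO hu hy).add_const δ) hv]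
  have : pd i (fun y => u y + δ) y = pd i u y := by
    simp [pd]
  rw [this]
  field_simp

lemma lap_wf (hO : IsOpen O) (hu : ContDiffOn ℝ ∞ u O) (h0 : ∀ y ∈ O, 0 ≤ u y) (hδ : 0 < δ)
    (heq : ∀ y ∈ O, lap u y = -(u y ^ p)) {y : Eu N} (hy : y ∈ O) :
    lap (wf u δ) y = -(u y ^ p / (u y + δ)) - ∑ i, (pd i (wf u δ) y) ^ 2 := by
  unfold lap
  rw [Finset.sum_congr rfl fun i _ => pd_pd_wf hO hu h0 hδ i hy, Finset.sum_sub_distrib,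
    ← Finset.sum_div]
  have := heq y hy
  unfold lap at this
  rw [this]; ring

lemma lap_pd_wf (hO : IsOpen O) (hu : ContDiffOn ℝ ∞ u O) (h0 : ∀ y ∈ O, 0 ≤ u y) (hδ : 0 < δ)
    (hp : 1 < p) (heq : ∀ y ∈ O, lap u y = -(u y ^ p)) {y : Eu N} (hy : y ∈ O) (j : Fin N) :
    lap (pd j (wf u δ)) y =
      -((p * u y ^ (p - 1) - u y ^ p / (u y + δ)) * pd j (wf u δ) y)
      - ∑ i, 2 * (pd i (wf u δ) y * pd j (pd i (wf u δ)) y) := by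
  have hw := wf_cdo hu h0 hδ
  rw [lap_pd hO hw hy, pd_congr hO (fun z hz => lap_wf hO hu h0 hδ heq hz) j y hy]
  have hv : u y + δ ≠ 0 := by have := h0 y hy; positivity
  have r1 : HasFDerivAt (fun y => u y ^ p) _ y :=
    (da hO hu hy).hasFDerivAt.rpow_const (p := p) (Or.inr hp.le)
  have r2 : pd j (fun y => u y ^ p) y = p * u y ^ (p - 1) * pd j u y := by
    rw [pd_of r1]; simp [pd]
  have r3 : pd j (fun y => u y + δ) y = pd j u y := by
    simp [pd]
  have r4 : DifferentiableAt ℝ (fun y => u y ^ p / (u y + δ)) y := by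
    simpa [div_eq_mul_inv] using! r1.differentiableAt.mul (((da hO hu hy).add_const δ).inv hv)
  have h2 : ∀ i ∈ Finset.univ, HasFDerivAt (fun y => (pd i (wf u δ) y) ^ 2) _ y := fun j _ =>
    (da hO (pd_cdo hO hw j) hy).hasFDerivAt.pow 2
  have h := r4.hasFDerivAt.neg.sub (HasFDerivAt.fun_sum h2)
  refine (pd_of h j).trans ?_
  have e : ∀ (f : Eu N → ℝ) (y : Eu N), fderiv ℝ f y (bv j) = pd j f y := fun _ _ => rfl
  simp only [sub_apply, neg_apply, sum_apply, smul_apply, e]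
  rw [pd_div r1.differentiableAt ((da hO hu hy).add_const δ) hv, r2, r3]
  rw [pd_wf hO hu h0 hδ j hy]
  congr 1
  · field_simp
  · exact Finset.sum_congr rfl fun i _ => by simp; ring

end w

end HODE

namespace HODE
open scoped ContDiff Topology

variable {N : ℕ} {O : Set (Eu N)} {x : Eu N}

/-- trace inequality -/
lemma trace_ineq (hN : 0 < N) (a : Fin N → ℝ) (B : Fin N → Fin N → ℝ) (α L : ℝ)
    (hL : ∑ i, B i i = L) :
    2 * α * (∑ i, ∑ j, a i * (a j * B i j)) - α ^ 2 * (∑ i, a i ^ 2) ^ 2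
      + (L - α * ∑ i, a i ^ 2) ^ 2 / N ≤ ∑ i, ∑ j, B i j ^ 2 := by
  have h1 : (L - α * ∑ i, a i ^ 2) ^ 2 ≤ N * ∑ i, (B i i - α * a i ^ 2) ^ 2 := by
    have := sq_sum_le_card_mul_sum_sq (s := (Finset.univ : Finset (Fin N)))
      (f := fun i => B i i - α * a i ^ 2)
    rw [Finset.sum_sub_distrib, hL, ← Finset.mul_sum] at this
    simpa using this
  have h2 : ∑ i, (B i i - α * a i ^ 2) ^ 2 ≤ ∑ i, ∑ j, (B i j - α * (a i * a j)) ^ 2 := by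
    refine Finset.sum_le_sum fun i _ => ?_
    have := Finset.single_le_sum (f := fun j => (B i j - α * (a i * a j)) ^ 2)
      (fun j _ => sq_nonneg _) (Finset.mem_univ i)
    refine le_trans (le_of_eq ?_) this
    ring
  have h3 : ∑ i, ∑ j, (B i j - α * (a i * a j)) ^ 2 = ∑ i, ∑ j, B i j ^ 2
      - 2 * α * (∑ i, ∑ j, a i * (a j * B i j)) + α ^ 2 * (∑ i, a i ^ 2) ^ 2 := by
    have : (∑ i, a i ^ 2) ^ 2 = ∑ i, ∑ j, a i ^ 2 * a j ^ 2 := by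
      rw [sq, Finset.sum_mul_sum]
    rw [this]
    simp only [Finset.mul_sum, ← Finset.sum_sub_distrib, ← Finset.sum_add_distrib]
    refine Finset.sum_congr rfl fun i _ => Finset.sum_congr rfl fun j _ => ?_
    ring
  have hN' : (0 : ℝ) < N := by exact_mod_cast hN
  have h4 : (L - α * ∑ i, a i ^ 2) ^ 2 / N ≤ ∑ i, (B i i - α * a i ^ 2) ^ 2 := by
    rw [div_le_iff₀ hN']; linarith
  linarith

lemma exp_mul_wf {u : Eu N → ℝ} {δ s : ℝ} {y : Eu N} (h : 0 < u y + δ) :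
    Real.exp (s * wf u δ y) = (u y + δ) ^ s := by
  rw [Real.rpow_def_of_pos h, wf, mul_comm]

lemma Qf_pos (d s : ℝ) (hd : 0 < d) (w : Eu N → ℝ) (y : Eu N) : 0 < Qf d s w y := by
  unfold Qf
  have : 0 ≤ ∑ j, (pd j w y) ^ 2 := Finset.sum_nonneg fun j _ => sq_nonneg _
  have := Real.exp_pos (s * w y)
  positivity

/-- The bound at a maximum point. -/
lemma maxpt (hN : 2 ≤ N) {p γ d : ℝ} (hp : 1 < p) (hd : 0 < d) (α C : ℝ)
    (hC : ∀ u δ F S H X Ξ z : ℝ, 0 ≤ u → 0 < δ → δ ≤ 1 → 0 ≤ F → 1 ≤ z →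
      X ^ 2 ≤ 16 * F * z → Ξ ≤ 16 * z →
      2 * S + d * (p - 1) * (u + δ) ^ (p - 1) * F
        = (F + d * (u + δ) ^ (p - 1)) * (X - γ * F) →
      γ * (-(u ^ p / (u + δ)) - F) * (F + d * (u + δ) ^ (p - 1)) + 2 * H
        - 2 * (p * u ^ (p - 1) - u ^ p / (u + δ)) * F - 4 * S
        + d * (p - 1) * (u + δ) ^ (p - 1) * ((p - 1) * F - u ^ p / (u + δ) - F)
        - (F + d * (u + δ) ^ (p - 1)) * (Ξ - 2 * γ * X + γ ^ 2 * F)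
        ≤ (4 * N + 8) * z * (F + d * (u + δ) ^ (p - 1)) →
      2 * α * S - α ^ 2 * F ^ 2 + (-(u ^ p / (u + δ)) - F - α * F) ^ 2 / N ≤ H →
      F + d * (u + δ) ^ (p - 1) ≤ C * z)
    (hO : IsOpen O) (hx : x ∈ O) {u : Eu N → ℝ} {δ : ℝ} (hu : ContDiffOn ℝ ∞ u O)
    (h0 : ∀ y ∈ O, 0 ≤ u y) (hδ : 0 < δ) (hδ1 : δ ≤ 1)
    (heq : ∀ y ∈ O, lap u y = -(u y ^ p)) (c : Eu N) (hZ0 : 0 < Zc c x)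
    (hmax : IsLocalMax (fun y => γ * wf u δ y + Real.log (Qf d (p - 1) (wf u δ) y)
      + 2 * Real.log (Zc c y)) x) :
    Qf d (p - 1) (wf u δ) x * Zc c x ^ 2 ≤ C := by
  have hw := wf_cdo hu h0 hδ
  have hQp : ∀ y ∈ O, 0 < Qf d (p - 1) (wf u δ) y := fun y _ => Qf_pos _ _ hd _ _
  have mc := max_cond hO hx γ hw (Qf_cdo hO hw d (p - 1)) (Zc_cdo c) hQp hZ0 hmax
  have hv : 0 < u x + δ := by have := h0 x hx; positivity
  set Z := Zc c x with hZ
  set G := (u x + δ) ^ (p - 1) with hG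
  set Q := Qf d (p - 1) (wf u δ) x with hQ
  set g := u x ^ p / (u x + δ) with hg
  set k := p * u x ^ (p - 1) with hk
  have hQ0 : 0 < Q := hQp x hx
  set a : Fin N → ℝ := fun i => pd i (wf u δ) x with ha
  set B : Fin N → Fin N → ℝ := fun i j => pd i (pd j (wf u δ)) x with hB
  set ξ : Fin N → ℝ := fun i => 4 * (x i - c i) / Z with hξ
  set F := ∑ i, a i ^ 2 with hF
  set S := ∑ i, ∑ j, a i * (a j * B i j) with hS
  set H := ∑ i, ∑ j, B i j ^ 2 with hH
  have hQF : Q = F + d * G := by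
    rw [hQ, Qf, exp_mul_wf hv]
  have hlw : lap (wf u δ) x = -g - F := lap_wf hO hu h0 hδ heq hx
  have hQi : ∀ i, pd i (Qf d (p - 1) (wf u δ)) x = Q * (ξ i - γ * a i) := by
    intro i
    have := (mc i).1
    rw [pd_Zc] at this
    have e : pd i (Qf d (p - 1) (wf u δ)) x / Q = ξ i - γ * a i := by
      simp only [hξ, ha]
      have e2 : 2 * (-2 * (x i - c i) / Z) = -(4 * (x i - c i) / Z) := by ring
      linarith
    rw [div_eq_iff hQ0.ne'] at e
    rw [e]; ring
  have hR : ∑ i, (x i - c i) ^ 2 = 1 - Z := by rw [hZ, Zc]; ring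
  have hR0 : 0 ≤ ∑ i, (x i - c i) ^ 2 := Finset.sum_nonneg fun i _ => sq_nonneg _
  have hZ1 : Z ≤ 1 := by linarith
  have hz1 : 1 ≤ 1 / Z ^ 2 := by
    rw [le_div_iff₀ (by positivity)]; nlinarith
  have hΞ : ∑ i, ξ i ^ 2 = 16 * (1 - Z) * (1 / Z ^ 2) := by
    have : ∀ i, ξ i ^ 2 = (16 / Z ^ 2) * (x i - c i) ^ 2 := by
      intro i; simp only [hξ]; ring
    simp only [this]
    rw [← Finset.mul_sum, hR]; ring
  have hF0 : 0 ≤ F := Finset.sum_nonneg fun i _ => sq_nonneg _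
  have hΞ' : ∑ i, ξ i ^ 2 ≤ 16 * (1 / Z ^ 2) := by
    rw [hΞ]
    have : 0 < 1 / Z ^ 2 := by linarith
    have := mul_nonneg hZ0.le this.le
    linarith
  have key := hC (u x) δ F S H (∑ i, ξ i * a i) (∑ i, ξ i ^ 2) (1 / Z ^ 2) (h0 x hx) hδ hδ1 hF0
    hz1 ?_ hΞ' ?_ ?_ ?_
  · rw [← hG, ← hQF] at key
    have h2 := mul_le_mul_of_nonneg_right key (sq_nonneg Z)
    have : C * (1 / Z ^ 2) * Z ^ 2 = C := by field_simp
    linarith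
  · have := Finset.sum_mul_sq_le_sq_mul_sq Finset.univ ξ a
    have h2 := mul_le_mul_of_nonneg_right hΞ' hF0
    linarith
  · -- first-order identity
    rw [← hG, ← hQF]
    have h1 : ∑ i, a i * pd i (Qf d (p - 1) (wf u δ)) x = 2 * S + d * (p - 1) * G * F := by
      rw [hS, hF, Finset.mul_sum, Finset.mul_sum, ← Finset.sum_add_distrib]
      refine Finset.sum_congr rfl fun i _ => ?_
      rw [pd_Qf hO hw d (p - 1) i hx, exp_mul_wf hv, mul_add, Finset.mul_sum, Finset.mul_sum]
      congr 1
      · refine Finset.sum_congr rfl fun j _ => ?_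
        simp only [ha, hB]; ring
      · simp only [ha, hG]; ring
    rw [← h1]
    have h2 : ∑ i, a i * pd i (Qf d (p - 1) (wf u δ)) x
      = ∑ i, (Q * (ξ i * a i) - Q * γ * a i ^ 2) := by
      refine Finset.sum_congr rfl fun i _ => ?_
      rw [hQi i]; ring
    rw [h2, Finset.sum_sub_distrib, ← Finset.mul_sum, ← Finset.mul_sum]
    ring
  · -- second-order inequality
    rw [← hG, ← hQF, ← hg, ← hk]
    have hlQ : ∑ i, pd i (pd i (Qf d (p - 1) (wf u δ))) x
        = 2 * H - 2 * (k - g) * F - 4 * S + d * (p - 1) * G * ((p - 1) * F - g - F) := by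
      have e1 : ∀ i, pd i (pd i (Qf d (p - 1) (wf u δ))) x =
          2 * ∑ j, B i j ^ 2 + 2 * ∑ j, a j * pd i (pd i (pd j (wf u δ))) x
          + d * (p - 1) * G * ((p - 1) * a i ^ 2 + pd i (pd i (wf u δ)) x) := by
        intro i
        rw [pd_pd_Qf hO hw d (p - 1) i hx, exp_mul_wf hv, Finset.mul_sum, Finset.mul_sum,
          ← Finset.sum_add_distrib]
        congr 1
        · refine Finset.sum_congr rfl fun j _ => ?_
          simp only [ha, hB]; ring
        · simp only [ha, hG]; ring
      simp only [e1]
      rw [Finset.sum_add_distrib, Finset.sum_add_distrib, ← Finset.mul_sum, ← Finset.mul_sum,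
        ← Finset.mul_sum, Finset.sum_add_distrib, ← Finset.mul_sum]
      have e2 : ∑ i, pd i (pd i (wf u δ)) x = -g - F := hlw
      have e3 : ∑ i, ∑ j, a j * pd i (pd i (pd j (wf u δ))) x = -((k - g) * F) - 2 * S := by
        rw [Finset.sum_comm]
        have e4 : ∀ j, ∑ i, a j * pd i (pd i (pd j (wf u δ))) x
            = -((k - g) * a j ^ 2) - 2 * ∑ i, a j * (a i * B j i) := by
          intro j
          rw [← Finset.mul_sum]
          have := lap_pd_wf hO hu h0 hδ hp heq hx j
          unfold lap at this
          rw [this, mul_sub, Finset.mul_sum, Finset.mul_sum]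
          congr 1
          · simp only [ha, hk, hg]; ring
          · refine Finset.sum_congr rfl fun i _ => ?_
            simp only [ha, hB]; ring
        simp only [e4]
        rw [Finset.sum_sub_distrib, Finset.sum_neg_distrib, ← Finset.mul_sum, ← Finset.mul_sum]
      rw [e2, e3, ← hH, ← hF]
      ring
    have h2 : ∑ i, (γ * pd i (pd i (wf u δ)) x + (pd i (pd i (Qf d (p - 1) (wf u δ))) x / Q
        - (ξ i - γ * a i) ^ 2) + 2 * (-2 / Z) - (1 / 2) * ξ i ^ 2) ≤ 0 := by
      refine Finset.sum_nonpos fun i _ => ?_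
      have := (mc i).2
      rw [pd_pd_Zc, hQi i, pd_Zc, mul_div_cancel_left₀ _ hQ0.ne'] at this
      have e2 : 2 * (-2 / Z - (-2 * (x i - c i) / Z) ^ 2) = 2 * (-2 / Z) - (1 / 2) * ξ i ^ 2 := by
        simp only [hξ]; ring
      linarith
    have h3 : ∑ i, (ξ i - γ * a i) ^ 2 = ∑ i, ξ i ^ 2 - 2 * γ * ∑ i, ξ i * a i + γ ^ 2 * F := by
      rw [hF, Finset.mul_sum, Finset.mul_sum, ← Finset.sum_sub_distrib, ← Finset.sum_add_distrib]
      exact Finset.sum_congr rfl fun i _ => by ring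
    rw [Finset.sum_sub_distrib, Finset.sum_add_distrib, Finset.sum_add_distrib,
      Finset.sum_sub_distrib, ← Finset.mul_sum, ← Finset.mul_sum, ← Finset.sum_div, hlQ, h3] at h2
    have e2 : ∑ i, pd i (pd i (wf u δ)) x = -g - F := hlw
    rw [e2, Finset.sum_const, Finset.card_univ, Fintype.card_fin, nsmul_eq_mul] at h2
    set L := 2 * H - 2 * (k - g) * F - 4 * S + d * (p - 1) * G * ((p - 1) * F - g - F) with hLL
    set Y := ∑ i, ξ i ^ 2 - 2 * γ * ∑ i, ξ i * a i + γ ^ 2 * F with hY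
    have h4 : γ * (-g - F) + L / Q - Y ≤ (4 * N + 8) * (1 / Z ^ 2) := by
      have e5 : 1 / Z ≤ 1 / Z ^ 2 := one_div_le_one_div_of_le (by positivity) (by nlinarith)
      have e6 : (4 * (N : ℝ)) * (1 / Z) ≤ 4 * N * (1 / Z ^ 2) :=
        mul_le_mul_of_nonneg_left e5 (by positivity)
      have e7 : 2 * ((N : ℝ) * (-2 / Z)) = -(4 * N * (1 / Z)) := by ring
      have e8 : ∑ i, 1 / 2 * ξ i ^ 2 = 1 / 2 * ∑ i, ξ i ^ 2 := (Finset.mul_sum _ _ _).symm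
      linarith
    have h5 := mul_le_mul_of_nonneg_right h4 hQ0.le
    have h6 : (γ * (-g - F) + L / Q - Y) * Q = γ * (-g - F) * Q + L - Q * Y := by
      field_simp
    linarith
  · have := trace_ineq (by omega) a B α (-g - F) hlw
    exact this

end HODE

namespace HODE
open scoped ContDiff Topology

variable {N : ℕ} {O : Set (Eu N)} {x : Eu N}

lemma Zc_eq (c y : Eu N) : Zc c y = 1 - dist y c ^ 2 := by
  rw [Zc, dist_eq_norm, ← sum_coord_sq]; simp

lemma bernstein_aux {γ d s C : ℝ} (hγ : γ < 0) (hd : 0 < d) 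
    (hO : IsOpen O) {u : Eu N → ℝ} {δ : ℝ} (hu : ContDiffOn ℝ ∞ u O)
    (h0 : ∀ y ∈ O, 0 ≤ u y) (hδ : 0 < δ) (c : Eu N) (hc : Metric.closedBall c 1 ⊆ O)
    (hmp : ∀ x ∈ O, 0 < Zc c x → IsLocalMax (fun y => γ * wf u δ y + Real.log (Qf d s (wf u δ) y)
      + 2 * Real.log (Zc c y)) x → Qf d s (wf u δ) x * Zc c x ^ 2 ≤ C) :
    (u c + δ) ^ γ * (∑ i, (pd i u c) ^ 2 / (u c + δ) ^ 2 + d * (u c + δ) ^ s) ≤ C * δ ^ γ := by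
  have hw := wf_cdo hu h0 hδ
  set Φ : Eu N → ℝ := fun y => Real.exp (γ * wf u δ y) * Qf d s (wf u δ) y * Zc c y ^ 2 with hΦ
  have hcont : ContinuousOn Φ (Metric.closedBall c 1) := by
    have h1 : ContDiffOn ℝ ∞ Φ O :=
      ((contDiffOn_const.mul hw).exp.mul (Qf_cdo hO hw d s)).mul ((Zc_cdo c).pow 2)
    exact h1.continuousOn.mono hc
  obtain ⟨x0, hx0, hmax⟩ := (isCompact_closedBall c 1).exists_isMaxOn
    ⟨c, Metric.mem_closedBall_self zero_le_one⟩ hcont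
  have hcO : c ∈ O := hc (Metric.mem_closedBall_self zero_le_one)
  have hQc := Qf_pos d s hd (wf u δ) c
  have hZc1 : Zc c c = 1 := by simp [Zc_eq]
  have hΦc : 0 < Φ c := by
    simp only [hΦ, hZc1]
    have := Real.exp_pos (γ * wf u δ c)
    positivity
  have hcx : Φ c ≤ Φ x0 := hmax (Metric.mem_closedBall_self zero_le_one)
  have hZne : Zc c x0 ≠ 0 := by
    intro h
    have : Φ x0 = 0 := by simp [hΦ, h]
    linarith
  have hdist : dist x0 c ≤ 1 := hx0
  have hd0 : 0 ≤ dist x0 c := dist_nonneg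
  have hZ0 : 0 < Zc c x0 := by
    refine lt_of_le_of_ne ?_ hZne.symm
    rw [Zc_eq]
    nlinarith
  have hball : dist x0 c < 1 := by
    rw [Zc_eq] at hZ0
    nlinarith
  have hloc : IsLocalMax (fun y => γ * wf u δ y + Real.log (Qf d s (wf u δ) y)
      + 2 * Real.log (Zc c y)) x0 := by
    have hlog : ∀ y ∈ Metric.ball c 1, γ * wf u δ y + Real.log (Qf d s (wf u δ) y)
      + 2 * Real.log (Zc c y) = Real.log (Φ y) ∧ 0 < Φ y := by
      intro y hy
      have hy' : dist y c < 1 := hy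
      have hyd : 0 ≤ dist y c := dist_nonneg
      have hZ : 0 < Zc c y := by rw [Zc_eq]; nlinarith
      have hQ := Qf_pos d s hd (wf u δ) y
      have hE := Real.exp_pos (γ * wf u δ y)
      refine ⟨?_, by simp only [hΦ]; positivity⟩
      simp only [hΦ]
      rw [Real.log_mul (by positivity) (by positivity), Real.log_mul (by positivity) (by positivity),
        Real.log_exp, Real.log_pow]
      norm_num
    have hx0b : x0 ∈ Metric.ball c 1 := hball
    filter_upwards [Metric.isOpen_ball.mem_nhds hx0b] with y hy
    rw [(hlog y hy).1, (hlog x0 hx0b).1]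
    exact Real.log_le_log (hlog y hy).2 (hmax (Metric.ball_subset_closedBall hy))
  have hb := hmp x0 (hc hx0) hZ0 hloc
  have hv0 : 0 < u x0 + δ := by have := h0 x0 (hc hx0); positivity
  have hvc : 0 < u c + δ := by have := h0 c hcO; positivity
  have h1 : Φ x0 ≤ δ ^ γ * C := by
    have e1 : Real.exp (γ * wf u δ x0) ≤ δ ^ γ := by
      rw [exp_mul_wf hv0]
      exact Real.rpow_le_rpow_of_nonpos hδ (by have := h0 x0 (hc hx0); linarith) hγ.le
    have e2 : 0 ≤ Qf d s (wf u δ) x0 * Zc c x0 ^ 2 := by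
      have := Qf_pos d s hd (wf u δ) x0
      positivity
    calc Φ x0 = Real.exp (γ * wf u δ x0) * (Qf d s (wf u δ) x0 * Zc c x0 ^ 2) := by
          simp only [hΦ]; ring
      _ ≤ δ ^ γ * (Qf d s (wf u δ) x0 * Zc c x0 ^ 2) := mul_le_mul_of_nonneg_right e1 e2
      _ ≤ δ ^ γ * C := mul_le_mul_of_nonneg_left hb (Real.rpow_nonneg hδ.le _)
  have h2 : Φ c = (u c + δ) ^ γ * (∑ i, (pd i u c) ^ 2 / (u c + δ) ^ 2 + d * (u c + δ) ^ s) := by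
    simp only [hΦ, hZc1, Qf]
    rw [exp_mul_wf hvc, exp_mul_wf hvc]
    simp only [pd_wf hO hu h0 hδ _ hcO, div_pow]
    ring
  rw [← h2]; linarith

/-- From the Bernstein inequality to sup and gradient bounds. -/
lemma scalar_conseq {γ d s C : ℝ} (hγ : γ < 0) (hd : 0 < d) (hgs : 0 < γ + s) (hC : 0 < C) :
    ∃ M : ℝ, 1 ≤ M ∧ ∀ a G : ℝ, 0 ≤ a → 0 ≤ G →
      (∀ δ : ℝ, 0 < δ → δ ≤ 1 → (a + δ) ^ γ * (G / (a + δ) ^ 2 + d * (a + δ) ^ s) ≤ C * δ ^ γ) →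
      a ≤ M ∧ G ≤ M ^ 2 * a ^ 2 := by
  set M1 := (C / d) ^ (γ + s)⁻¹ with hM1
  have hM10 : 0 ≤ M1 := by positivity
  set K := C * 2 ^ (2 - γ) * (1 + M1 ^ (-γ)) with hK
  have hK0 : 0 ≤ K := by positivity
  refine ⟨1 + M1 + K, by linarith, fun a G ha hG h => ?_⟩
  have hA : a + 1 ≤ M1 := by
    have h1 := h 1 one_pos le_rfl
    rw [Real.one_rpow, mul_one, mul_add] at h1
    have h2 : 0 ≤ (a + 1) ^ γ * (G / (a + 1) ^ 2) := by positivity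
    have h3 : (a + 1) ^ γ * (d * (a + 1) ^ s) = d * (a + 1) ^ (γ + s) := by
      rw [Real.rpow_add (by positivity)]; ring
    have h4 : (a + 1) ^ (γ + s) ≤ C / d := by
      rw [le_div_iff₀ hd]; linarith
    have h5 := Real.rpow_le_rpow (by positivity) h4 (inv_nonneg.2 hgs.le)
    rwa [Real.rpow_rpow_inv (by positivity) hgs.ne'] at h5
  have hgen : ∀ δ : ℝ, 0 < δ → δ ≤ 1 → G ≤ C * δ ^ γ * (a + δ) ^ (2 - γ) := by
    intro δ h0 h1
    have h2 := h δ h0 h1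
    have hp : 0 < a + δ := by positivity
    rw [mul_add] at h2
    have h3 : 0 ≤ (a + δ) ^ γ * (d * (a + δ) ^ s) := by positivity
    have h4 : (a + δ) ^ γ * (G / (a + δ) ^ 2) = G / (a + δ) ^ (2 - γ) := by
      rw [Real.rpow_sub hp, Real.rpow_two]
      field_simp
    have h5 : G / (a + δ) ^ (2 - γ) ≤ C * δ ^ γ := by linarith
    rwa [div_le_iff₀ (by positivity)] at h5
  have hGK : G ≤ K * a ^ 2 := by
    have hMg : 0 ≤ M1 ^ (-γ) := by positivity
    rcases ha.eq_or_lt with h0 | h0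
    · subst h0
      have h1 : ∀ δ : ℝ, 0 < δ → δ ≤ 1 → G ≤ C * δ ^ 2 := by
        intro δ h0 h1
        have := hgen δ h0 h1
        rw [zero_add, mul_assoc, ← Real.rpow_add h0] at this
        simpa using this
      have h2 : G ≤ 0 := by
        refine le_of_forall_pos_le_add fun ε hε => ?_
        set δ := min 1 (ε / C) with hδ
        have hδ0 : 0 < δ := lt_min one_pos (by positivity)
        have h3 := h1 δ hδ0 (min_le_left _ _)
        have h4 : C * δ ≤ ε := by
          have : δ ≤ ε / C := min_le_right _ _
          rw [le_div_iff₀ hC] at this; linarith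
        have h5 : C * δ ^ 2 ≤ C * δ := by
          apply mul_le_mul_of_nonneg_left _ hC.le
          have : δ ≤ 1 := min_le_left _ _
          nlinarith
        linarith
      simpa using h2
    · have e2 : (2 * a) ^ (2 - γ) = 2 ^ (2 - γ) * (a ^ 2 * a ^ (-γ)) := by
        rw [Real.mul_rpow (by norm_num) ha]
        congr 1
        rw [sub_eq_add_neg, Real.rpow_add h0, Real.rpow_two]
      have e3 : a ^ γ * a ^ (-γ) = 1 := by
        rw [← Real.rpow_add h0]; simp
      have hB : 0 ≤ C * 2 ^ (2 - γ) * a ^ 2 := by positivity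
      rcases le_or_gt a 1 with h1 | h1
      · have := hgen a h0 h1
        rw [← two_mul, e2] at this
        have e4 : C * a ^ γ * (2 ^ (2 - γ) * (a ^ 2 * a ^ (-γ)))
          = C * 2 ^ (2 - γ) * a ^ 2 * (a ^ γ * a ^ (-γ)) := by ring
        rw [e4, e3] at this
        have e5 := mul_nonneg hB hMg
        rw [hK]; linarith
      · have := hgen 1 one_pos le_rfl
        have e4 : (a + 1) ^ (2 - γ) ≤ (2 * a) ^ (2 - γ) :=
          Real.rpow_le_rpow (by positivity) (by linarith) (by linarith)
        rw [e2] at e4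
        have e5 := mul_le_mul_of_nonneg_left e4 hC.le
        have e6 : a ^ (-γ) ≤ M1 ^ (-γ) := Real.rpow_le_rpow ha (by linarith) (by linarith)
        have e7 := mul_le_mul_of_nonneg_left e6 hB
        rw [Real.one_rpow, mul_one] at this
        rw [hK]; linarith
  refine ⟨by linarith, hGK.trans (mul_le_mul_of_nonneg_right ?_ (sq_nonneg a))⟩
  nlinarith

/-- Unit-scale sup and gradient bounds. -/
lemma sup_grad_bound (N : ℕ) (hN : 2 ≤ N) (p : ℝ) (hp : 1 < p)
    (hsub : ((N : ℝ) - 2) * p < N + 2) :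
    ∃ M : ℝ, 1 ≤ M ∧ ∀ (O : Set (Eu N)) (u : Eu N → ℝ), IsOpen O → ContDiffOn ℝ ∞ u O →
      (∀ y ∈ O, 0 ≤ u y) → (∀ y ∈ O, lap u y = -(u y ^ p)) →
      ∀ c, Metric.closedBall c 1 ⊆ O →
        u c ≤ M ∧ ∑ i, (pd i u c) ^ 2 ≤ M ^ 2 * u c ^ 2 := by
  have hN' : (2 : ℝ) ≤ N := by exact_mod_cast hN
  obtain ⟨γ, d, α, hγ, hd, hgs, he, hc1, hκ⟩ := exists_params N p hN' hp hsub
  obtain ⟨C, hC0, hC⟩ := scalar_bound N p γ d α hN' hp hd hgs he hc1 hκ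
  obtain ⟨M, hM1, hM⟩ := scalar_conseq hγ hd hgs hC0
  refine ⟨M, hM1, fun O u hO hu h0 heq c hc => ?_⟩
  have hcO : c ∈ O := hc (Metric.mem_closedBall_self zero_le_one)
  refine hM _ _ (h0 c hcO) (Finset.sum_nonneg fun i _ => sq_nonneg _) fun δ hδ hδ1 => ?_
  have := bernstein_aux (s := p - 1) hγ hd hO hu h0 hδ c hc (C := C) fun x hx hZ hm =>
    maxpt hN hp hd α C hC hO hx hu h0 hδ hδ1 heq c hZ hm
  rwa [← Finset.sum_div] at this

end HODE

namespace HODE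
open scoped ContDiff Topology

variable {N : ℕ} {O : Set (Eu N)} {x : Eu N}

/-- reflection in the `i`-th coordinate -/
noncomputable def rfl_i (i : Fin N) (y : Eu N) : Eu N := y - (2 * y i) • bv i

lemma rfl_i_apply (i j : Fin N) (y : Eu N) : rfl_i i y j = if j = i then - y i else y j := by
  simp only [rfl_i, PiLp.sub_apply, PiLp.smul_apply, bv_apply, smul_eq_mul]
  split_ifs with h
  · subst h; ring
  · ring

lemma norm_rfl_i (i : Fin N) (y : Eu N) : ‖rfl_i i y‖ = ‖y‖ := by
  have : ‖rfl_i i y‖ ^ 2 = ‖y‖ ^ 2 := by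
    rw [← sum_coord_sq, ← sum_coord_sq]
    refine Finset.sum_congr rfl fun j _ => ?_
    rw [rfl_i_apply]
    split_ifs with h
    · subst h; ring
    · rfl
  exact (pow_left_inj₀ (norm_nonneg _) (norm_nonneg _) two_ne_zero).1 this

lemma rfl_i_add (i j : Fin N) (y : Eu N) (t : ℝ) :
    rfl_i i (y + t • bv j) = rfl_i i y + ((if j = i then -1 else 1) * t) • bv j := by
  ext k
  simp only [rfl_i_apply, PiLp.add_apply, PiLp.smul_apply, bv_apply, smul_eq_mul]
  by_cases h1 : j = i
  · subst h1
    by_cases h2 : k = j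
    · subst h2; simp; ring
    · simp [h2]
  · by_cases h2 : k = i
    · subst h2
      simp [h1, Ne.symm h1]
    · simp [h1, h2]

lemma norm_line (y : Eu N) (j : Fin N) (t : ℝ) :
    ‖y + t • bv j‖ ^ 2 = ‖y‖ ^ 2 + 2 * t * y j + t ^ 2 := by
  rw [@norm_add_sq_real, norm_smul, norm_bv, inner_smul_right]
  have : inner ℝ y (bv j) = y j := by
    simp [bv, EuclideanSpace.inner_single_right]
  rw [this]
  simp; ring

lemma line_eps (hO : IsOpen O) {h : Eu N → ℝ} (hf : ContDiffOn ℝ ∞ h O) {z : Eu N} (hz : z ∈ O)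
    (j : Fin N) (e : ℝ) :
    ∀ᶠ t : ℝ in 𝓝 0, HasDerivAt (fun t : ℝ => h (z + (e * t) • bv j))
      (e * pd j h (z + (e * t) • bv j)) t := by
  have h1 : Filter.Tendsto (fun t : ℝ => e * t) (𝓝 0) (𝓝 0) := by
    have : Continuous fun t : ℝ => e * t := by fun_prop
    simpa using this.tendsto 0
  filter_upwards [h1.eventually (line_hasDeriv hO hf hz j)] with t ht
  have h2 : HasDerivAt (fun t : ℝ => e * t) e t := by
    simpa using (hasDerivAt_id t).const_mul e
  have := ht.comp t h2
  rw [mul_comm]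
  exact this

lemma grad_one_side (hO : IsOpen O) {h : Eu N → ℝ} (hf : ContDiffOn ℝ ∞ h O)
    (hx : Metric.closedBall x 1 ⊆ O) {A : ℝ} (hA : 0 < A)
    (h1 : ∀ y ∈ Metric.closedBall x 1, |h y| ≤ A)
    (h2 : ∀ y ∈ Metric.closedBall x 1, |lap h y| ≤ A) (i : Fin N) :
    pd i h x ≤ (N + 1) * A := by
  set K : ℝ := N + 1 with hK
  have hK0 : 0 < K := by positivity
  set Ψ : Eu N → ℝ := fun y => (1 / 2) * (h (x + y) - h (x + rfl_i i y))
    - A * (‖y‖ ^ 2 + K * (y i - (y i) ^ 2)) with hΨ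
  set D : Set (Eu N) := Metric.closedBall 0 1 ∩ {y | 0 ≤ y i} with hD
  have hmem : ∀ y : Eu N, ‖y‖ ≤ 1 → x + y ∈ Metric.closedBall x 1 := by
    intro y hy; simpa [dist_eq_norm] using hy
  have hrc : Continuous (rfl_i i : Eu N → Eu N) := by unfold rfl_i; fun_prop
  have hDc : IsCompact D := by
    refine (isCompact_closedBall 0 1).inter_right ?_
    exact isClosed_le continuous_const (by fun_prop)
  have hcont : ContinuousOn Ψ D := by
    have c1 : ContinuousOn (fun y : Eu N => h (x + y)) D :=
      hf.continuousOn.comp (by fun_prop) fun y hy => hx (hmem y (by simpa using hy.1))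
    have c2 : ContinuousOn (fun y : Eu N => h (x + rfl_i i y)) D :=
      hf.continuousOn.comp (by fun_prop) fun y hy =>
        hx (hmem _ (by rw [norm_rfl_i]; simpa using hy.1))
    have c3 : Continuous fun y : Eu N => A * (‖y‖ ^ 2 + K * (y i - (y i) ^ 2)) := by fun_prop
    exact (continuousOn_const.mul (c1.sub c2)).sub c3.continuousOn
  have h0D : (0 : Eu N) ∈ D := by simp [hD]
  obtain ⟨y0, hy0, hmax⟩ := hDc.exists_isMaxOn ⟨0, h0D⟩ hcont
  have hy0n : ‖y0‖ ≤ 1 := by simpa using hy0.1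
  have hy0i : 0 ≤ y0 i := hy0.2
  have hm1 := hmem y0 hy0n
  have hm2 := hmem (rfl_i i y0) (by rw [norm_rfl_i]; exact hy0n)
  have hle : Ψ y0 ≤ 0 := by
    by_contra! hpos
    have hi : y0 i ≤ 1 := by
      have := sum_coord_sq y0
      have h3 := Finset.single_le_sum (f := fun j => (y0 j) ^ 2) (fun j _ => sq_nonneg _)
        (Finset.mem_univ i)
      simp only [] at h3
      nlinarith [norm_nonneg y0]
    have hi0 : 0 < y0 i := by
      refine lt_of_le_of_ne hy0i fun he => ?_
      have e1 : rfl_i i y0 = y0 := by simp [rfl_i, ← he]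
      simp only [hΨ, e1, ← he] at hpos
      have := mul_nonneg hA.le (sq_nonneg ‖y0‖)
      simp at hpos
      linarith
    have hn1 : ‖y0‖ < 1 := by
      refine lt_of_le_of_ne hy0n fun he => ?_
      have a1 := abs_le.1 (h1 _ hm1)
      have a2 := abs_le.1 (h1 _ hm2)
      have a3 : 0 ≤ A * (K * (y0 i - (y0 i) ^ 2)) := by
        apply mul_nonneg hA.le (mul_nonneg hK0.le _)
        nlinarith
      simp only [hΨ, he] at hpos
      linarith
    have hloc : IsLocalMax Ψ y0 := by
      have hop : IsOpen (Metric.ball (0 : Eu N) 1 ∩ {y | 0 < y i}) :=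
        Metric.isOpen_ball.inter (isOpen_lt continuous_const (by fun_prop))
      filter_upwards [hop.mem_nhds ⟨by simpa using hn1, hi0⟩] with y hy
      have hy2 : 0 < y i := hy.2
      exact hmax ⟨Metric.ball_subset_closedBall hy.1, hy2.le⟩
    have hj : ∀ j : Fin N, (1 / 2) * (pd j (pd j h) (x + y0) - pd j (pd j h) (x + rfl_i i y0))
        - A * (2 - 2 * K * (if j = i then 1 else 0)) ≤ 0 := by
      intro j
      have hl := line_max j hloc
      set ε : ℝ := if j = i then -1 else 1 with hε
      have hε2 : ε * ε = 1 := by rw [hε]; split_ifs <;> norm_num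
      set e : ℝ := if j = i then 1 else 0 with he
      have he2 : e * e = e := by rw [he]; split_ifs <;> norm_num
      have hfun : (fun t : ℝ => Ψ (y0 + t • bv j)) = fun t : ℝ =>
          (1 / 2) * (h (x + y0 + (1 * t) • bv j) - h (x + rfl_i i y0 + (ε * t) • bv j))
          - A * ((‖y0‖ ^ 2 + 2 * t * y0 j + t ^ 2)
            + K * ((y0 i + e * t) - (y0 i + e * t) ^ 2)) := by
        funext t
        simp only [hΨ, rfl_i_add, norm_line, one_mul, add_assoc]
        have : (y0 + t • bv j) i = y0 i + e * t := by
          simp only [PiLp.add_apply, PiLp.smul_apply, bv_apply, smul_eq_mul, he]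
          by_cases hji : j = i
          · subst hji; simp
          · simp [hji, Ne.symm hji]
        rw [this]
      rw [hfun] at hl
      have hpoly : ∀ t : ℝ, HasDerivAt (fun t : ℝ => A * ((‖y0‖ ^ 2 + 2 * t * y0 j + t ^ 2)
            + K * ((y0 i + e * t) - (y0 i + e * t) ^ 2)))
            (A * ((2 * y0 j + 2 * t) + K * (e - 2 * (y0 i + e * t) * e))) t := by
        intro t
        have i1 := hasDerivAt_id t
        have i2 := (((i1.const_mul 2).mul_const (y0 j)).const_add (‖y0‖ ^ 2)).add (i1.pow 2)
        have i3 := (i1.const_mul e).const_add (y0 i)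
        have i4 := (i2.add ((i3.sub (i3.pow 2)).const_mul K)).const_mul A
        convert! i4 using 1
        simp
      have hpoly2 : HasDerivAt (fun t : ℝ =>
            (A * ((2 * y0 j + 2 * t) + K * (e - 2 * (y0 i + e * t) * e))))
            (A * (2 - 2 * K * e)) 0 := by
        have i1 := hasDerivAt_id (0 : ℝ)
        have i3 := (((((i1.const_mul e).const_add (y0 i)).const_mul 2).mul_const e).const_sub
          e).const_mul K
        have i4 := (((i1.const_mul 2).const_add (2 * y0 j)).add i3).const_mul A
        convert! i4 using 1
        linear_combination 2 * A * K * he2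
      have d1 := line_eps hO hf (hx hm1) j 1
      have d2 := line_eps hO hf (hx hm2) j ε
      have b1 := (line_eps hO (pd_cdo hO hf j) (hx hm1) j 1).self_of_nhds
      have b2 := (line_eps hO (pd_cdo hO hf j) (hx hm2) j ε).self_of_nhds
      have hder := second_deriv_nonpos hl (φ' := fun t =>
        (1 / 2) * (1 * pd j h (x + y0 + (1 * t) • bv j)
          - ε * pd j h (x + rfl_i i y0 + (ε * t) • bv j))
          - A * ((2 * y0 j + 2 * t) + K * (e - 2 * (y0 i + e * t) * e))) (by
          filter_upwards [d1, d2] with t a1 a2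
          exact ((a1.sub a2).const_mul (1 / 2)).sub (hpoly t))
        ((((b1.const_mul 1).sub (b2.const_mul ε)).const_mul (1 / 2)).sub hpoly2)
      have := hder.2
      rw [← mul_assoc ε ε, hε2] at this
      simpa using this
    have hs := Finset.sum_nonpos fun j (_ : j ∈ Finset.univ) => hj j
    rw [Finset.sum_sub_distrib, ← Finset.mul_sum, ← Finset.mul_sum, Finset.sum_sub_distrib,
      Finset.sum_sub_distrib, ← Finset.mul_sum] at hs
    simp only [Finset.sum_const, Finset.card_univ, Fintype.card_fin, nsmul_eq_mul,
      Finset.sum_ite_eq', Finset.mem_univ, if_true] at hs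
    have l1 := abs_le.1 (h2 _ hm1)
    have l2 := abs_le.1 (h2 _ hm2)
    unfold lap at l1 l2
    rw [hK] at hs
    have e3 : A * ((N : ℝ) * 2 - 2 * (N + 1) * 1) = -2 * A := by ring
    rw [e3] at hs
    linarith
  -- differentiate at the origin
  have hxO : x ∈ O := hx (Metric.mem_closedBall_self zero_le_one)
  have d1 := (line_eps hO hf hxO i 1).self_of_nhds
  have d2 := (line_eps hO hf hxO i (-1)).self_of_nhds
  have hpoly : HasDerivAt (fun t : ℝ => A * (t ^ 2 + K * (t - t ^ 2))) (A * K) 0 := by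
    have i1 := hasDerivAt_id (0 : ℝ)
    have i4 := ((i1.pow 2).add ((i1.sub (i1.pow 2)).const_mul K)).const_mul A
    convert! i4 using 1
    simp
  have hd := ((d1.sub d2).const_mul (1 / 2)).sub hpoly
  have hval : ∀ t : ℝ, 0 ≤ t → t ≤ 1 → (1 / 2) * (h (x + (1 * t) • bv i) - h (x + (-1 * t) • bv i))
      - A * (t ^ 2 + K * (t - t ^ 2)) ≤ 0 := by
    intro t ht0 ht1
    have hyD : t • (bv i : Eu N) ∈ D := by
      refine ⟨?_, ?_⟩
      · simp [norm_smul, norm_bv, abs_of_nonneg ht0, ht1]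
      · simp [bv_apply, ht0]
    have h3 := (hmax hyD : Ψ _ ≤ Ψ _).trans hle
    have e1 : rfl_i i (t • bv i) = (-1 * t) • bv i := by
      have := rfl_i_add i i 0 t
      rw [zero_add] at this
      rw [this]; simp [rfl_i]
    have e2 : ‖t • (bv i : Eu N)‖ = t := by simp [norm_smul, norm_bv, abs_of_nonneg ht0]
    simp only [hΨ, e1, e2] at h3
    simpa [bv_apply] using h3
  by_contra! hcon
  have hslope := hd.hasDerivWithinAt (s := Set.Ioi 0)
  rw [hasDerivWithinAt_iff_tendsto_slope' (by simp)] at hslope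
  have : (1 / 2 * (1 * pd i h (x + (1 * 0 : ℝ) • bv i) - -1 * pd i h (x + (-1 * 0 : ℝ) • bv i)) - A * K) ≤ 0 := by
    refine le_of_tendsto hslope ?_
    have : Set.Ioo (0 : ℝ) 1 ∈ 𝓝[>] (0 : ℝ) := Ioo_mem_nhdsGT one_pos
    filter_upwards [this] with t ht
    rw [slope_def_field]
    refine div_nonpos_of_nonpos_of_nonneg ?_ (by linarith [ht.1])
    have := hval t ht.1.le ht.2.le
    simp only [Pi.sub_apply] at this ⊢
    simpa using this
  simp at this
  linarith

lemma pd_neg (f : Eu N → ℝ) (i : Fin N) : pd i (fun y => - f y) = fun y => - pd i f y := by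
  funext y; simp [pd]

lemma grad_bound (hO : IsOpen O) {h : Eu N → ℝ} (hf : ContDiffOn ℝ ∞ h O)
    (hx : Metric.closedBall x 1 ⊆ O) {A : ℝ} (hA : 0 < A)
    (h1 : ∀ y ∈ Metric.closedBall x 1, |h y| ≤ A)
    (h2 : ∀ y ∈ Metric.closedBall x 1, |lap h y| ≤ A) (i : Fin N) :
    |pd i h x| ≤ (N + 1) * A := by
  rw [abs_le]
  have a := grad_one_side hO hf hx hA h1 h2 i
  have b := grad_one_side hO hf.neg hx hA (fun y hy => by simpa using h1 y hy)
    (fun y hy => by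
      have : lap (fun y => - h y) y = - lap h y := by
        unfold lap; simp only [pd_neg]; simp
      rw [this, abs_neg]; exact h2 y hy) i
  rw [pd_neg] at b
  constructor <;> linarith

end HODE

namespace HODE
open scoped ContDiff Topology

variable {N : ℕ} {O : Set (Eu N)} {x : Eu N}

lemma harnack_1d {φ φ' : ℝ → ℝ} {k : ℝ} (hd : ∀ t ∈ Set.Icc (0 : ℝ) 1, HasDerivAt φ (φ' t) t)
    (hb : ∀ t ∈ Set.Icc (0 : ℝ) 1, |φ' t| ≤ k * φ t) :
    Real.exp (-k) * φ 0 ≤ φ 1 ∧ φ 1 ≤ Real.exp k * φ 0 := by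
  have key : ∀ e : ℝ, ∀ t ∈ Set.Icc (0 : ℝ) 1,
      HasDerivAt (fun t => Real.exp (e * t) * φ t) (Real.exp (e * t) * (e * φ t + φ' t)) t := by
    intro e t ht
    have h1 : HasDerivAt (fun t : ℝ => Real.exp (e * t)) (Real.exp (e * t) * e) t := by
      simpa using ((hasDerivAt_id t).const_mul e).exp
    convert! h1.mul (hd t ht) using 1
    ring
  have h01 : (0 : ℝ) ∈ Set.Icc (0 : ℝ) 1 := by simp
  have h11 : (1 : ℝ) ∈ Set.Icc (0 : ℝ) 1 := by simp
  have hmon : MonotoneOn (fun t => Real.exp (k * t) * φ t) (Set.Icc 0 1) := by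
    refine monotoneOn_of_deriv_nonneg (convex_Icc 0 1)
      (fun t ht => (key k t ht).continuousAt.continuousWithinAt)
      (fun t ht => (key k t (interior_subset ht)).differentiableAt.differentiableWithinAt) ?_
    intro t ht
    rw [(key k t (interior_subset ht)).deriv]
    have := abs_le.1 (hb t (interior_subset ht))
    exact mul_nonneg (Real.exp_pos _).le (by linarith)
  have hant : AntitoneOn (fun t => Real.exp (-k * t) * φ t) (Set.Icc 0 1) := by
    refine antitoneOn_of_deriv_nonpos (convex_Icc 0 1)
      (fun t ht => (key (-k) t ht).continuousAt.continuousWithinAt)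
      (fun t ht => (key (-k) t (interior_subset ht)).differentiableAt.differentiableWithinAt) ?_
    intro t ht
    rw [(key (-k) t (interior_subset ht)).deriv]
    have := abs_le.1 (hb t (interior_subset ht))
    exact mul_nonpos_of_nonneg_of_nonpos (Real.exp_pos _).le (by linarith)
  have a := hmon h01 h11 zero_le_one
  have b := hant h01 h11 zero_le_one
  simp only [mul_zero, Real.exp_zero, one_mul, mul_one] at a b
  have e1 : Real.exp k * Real.exp (-k) = 1 := by rw [← Real.exp_add]; simp
  have p1 := Real.exp_pos k
  have p2 := Real.exp_pos (-k)
  constructor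
  · have := mul_le_mul_of_nonneg_left a p2.le
    have e2 : Real.exp (-k) * (Real.exp k * φ 1) = (Real.exp k * Real.exp (-k)) * φ 1 := by ring
    rw [e2, e1] at this
    linarith
  · have := mul_le_mul_of_nonneg_left b p1.le
    have e2 : Real.exp k * (Real.exp (-k) * φ 1) = (Real.exp k * Real.exp (-k)) * φ 1 := by ring
    rw [e2, e1] at this
    linarith

lemma eu_sum (v : Eu N) : v = ∑ i, v i • bv i := by
  ext j
  simp [bv_apply]

lemma fderiv_le (f : Eu N → ℝ) (y v : Eu N) {G : ℝ} (hG : 0 ≤ G)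
    (h : ∑ i, (pd i f y) ^ 2 ≤ G ^ 2) : |fderiv ℝ f y v| ≤ G * ‖v‖ := by
  have h1 : fderiv ℝ f y v = ∑ i, v i * pd i f y := by
    conv_lhs => rw [eu_sum v]
    rw [map_sum]
    simp [pd]
  have h2 := Finset.sum_mul_sq_le_sq_mul_sq Finset.univ (fun i => v i) (fun i => pd i f y)
  rw [sum_coord_sq, ← h1] at h2
  apply abs_le_of_sq_le_sq _ (by positivity)
  calc _ ≤ _ := h2
    _ ≤ ‖v‖ ^ 2 * G ^ 2 := mul_le_mul_of_nonneg_left h (sq_nonneg _)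
    _ = _ := by ring

lemma harnack (hO : IsOpen O) {u : Eu N → ℝ} (hu : ContDiffOn ℝ ∞ u O) {L M : ℝ}
    (hM : 0 ≤ M) (hL : ∀ y : Eu N, ‖y‖ ≤ L → y ∈ O)
    (h0 : ∀ y ∈ O, 0 ≤ u y)
    (hg : ∀ y : Eu N, ‖y‖ ≤ L → ∑ i, (pd i u y) ^ 2 ≤ M ^ 2 * u y ^ 2) (y : Eu N) (hy : ‖y‖ ≤ L) :
    Real.exp (-(M * L)) * u 0 ≤ u y ∧ u y ≤ Real.exp (M * L) * u 0 := by
  have hty : ∀ t ∈ Set.Icc (0 : ℝ) 1, ‖t • y‖ ≤ L := by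
    intro t ht
    rw [norm_smul, Real.norm_eq_abs, abs_of_nonneg ht.1]
    have := mul_le_mul_of_nonneg_right ht.2 (norm_nonneg y)
    linarith
  have := harnack_1d (φ := fun t : ℝ => u (t • y)) (φ' := fun t => fderiv ℝ u (t • y) y)
    (k := M * L) (fun t ht => by
      have h1 : HasDerivAt (fun t : ℝ => t • y) y t := by
        simpa using (hasDerivAt_id t).smul_const y
      exact (da hO hu (hL _ (hty t ht))).hasFDerivAt.comp_hasDerivAt t h1) (fun t ht => by
      have hp := h0 _ (hL _ (hty t ht))
      have h1 := fderiv_le u (t • y) y (G := M * u (t • y)) (by positivity)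
        (by rw [mul_pow]; exact hg _ (hty t ht))
      have h2 := mul_le_mul_of_nonneg_left hy (by positivity : 0 ≤ M * u (t • y))
      linarith)
  simpa using this

end HODE

namespace HODE
open scoped ContDiff Topology

variable {N : ℕ} {O : Set (Eu N)} {x : Eu N}

/-- iterated partial derivative -/
noncomputable def pdv : (n : ℕ) → (Fin n → Fin N) → (Eu N → ℝ) → Eu N → ℝ
  | 0, _, f => f
  | n + 1, v, f => pd (v 0) (pdv n (Fin.tail v) f)

lemma pdv_cdo (hO : IsOpen O) {f : Eu N → ℝ} (hf : ContDiffOn ℝ ∞ f O) :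
    ∀ (n : ℕ) (v : Fin n → Fin N), ContDiffOn ℝ ∞ (pdv n v f) O
  | 0, _ => hf
  | n + 1, v => pd_cdo hO (pdv_cdo hO hf n (Fin.tail v)) (v 0)

lemma pdv_congr (hO : IsOpen O) {f g : Eu N → ℝ} (h : ∀ y ∈ O, f y = g y) :
    ∀ (n : ℕ) (v : Fin n → Fin N), ∀ y ∈ O, pdv n v f y = pdv n v g y
  | 0, _ => h
  | n + 1, v => pd_congr hO (pdv_congr hO h n (Fin.tail v)) (v 0)

lemma lap_pdv (hO : IsOpen O) {f : Eu N → ℝ} (hf : ContDiffOn ℝ ∞ f O) :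
    ∀ (n : ℕ) (v : Fin n → Fin N), ∀ y ∈ O, lap (pdv n v f) y = pdv n v (lap f) y
  | 0, _ => fun _ _ => rfl
  | n + 1, v => fun y hy => by
    simp only [pdv]
    rw [lap_pd hO (pdv_cdo hO hf n (Fin.tail v)) hy]
    exact pd_congr hO (lap_pdv hO hf n (Fin.tail v)) (v 0) y hy

lemma pd_const_mul (a : ℝ) (f : Eu N → ℝ) (hf : DifferentiableAt ℝ f x) (i : Fin N) :
    pd i (fun y => a * f y) x = a * pd i f x := by
  rw [pd_of (hf.hasFDerivAt.const_mul a)]; simp [pd]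

lemma pdv_const_mul (hO : IsOpen O) {f : Eu N → ℝ} (hf : ContDiffOn ℝ ∞ f O) (a : ℝ) :
    ∀ (n : ℕ) (v : Fin n → Fin N), ∀ y ∈ O, pdv n v (fun y => a * f y) y = a * pdv n v f y
  | 0, _ => fun _ _ => rfl
  | n + 1, v => fun y hy => by
    simp only [pdv]
    rw [pd_congr hO (pdv_const_mul hO hf a n (Fin.tail v)) (v 0) y hy]
    exact pd_const_mul a _ (da hO (pdv_cdo hO hf n _) hy) _

lemma pdv_eq (hO : IsOpen O) {f : Eu N → ℝ} (hf : ContDiffOn ℝ ∞ f O) :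
    ∀ (n : ℕ) (v : Fin n → Fin N), ∀ y ∈ O,
      pdv n v f y = iteratedFDeriv ℝ n f y (fun k => bv (v k))
  | 0, _ => fun y _ => by simp [pdv]
  | n + 1, v => fun y hy => by
    simp only [pdv]
    rw [pd_congr hO (pdv_eq hO hf n (Fin.tail v)) (v 0) y hy, iteratedFDeriv_succ_apply_left]
    have hd : DifferentiableAt ℝ (iteratedFDeriv ℝ n f) y :=
      (cda hO hf hy).differentiableAt_iteratedFDeriv (by
        exact_mod_cast (WithTop.coe_lt_coe.2 (ENat.natCast_lt_top n)))
    have h2 := ((ContinuousMultilinearMap.apply ℝ (fun _ : Fin n => Eu N) ℝ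
      (fun k => bv (Fin.tail v k))).hasFDerivAt.comp y hd.hasFDerivAt)
    refine (pd_of h2 _).trans ?_
    rfl

lemma abs_coord_le (y : Eu N) (i : Fin N) : |y i| ≤ ‖y‖ := by
  simpa using PiLp.norm_apply_le y i

lemma norm_le_of_basis {n : ℕ} (T : ContinuousMultilinearMap ℝ (fun _ : Fin n => Eu N) ℝ) {B : ℝ}
    (hB : 0 ≤ B) (h : ∀ v : Fin n → Fin N, |T (fun k => bv (v k))| ≤ B) :
    ‖T‖ ≤ (N : ℝ) ^ n * B := by
  refine ContinuousMultilinearMap.opNorm_le_bound (by positivity) fun m => ?_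
  have h1 : T m = ∑ v : Fin n → Fin N, (∏ k, m k (v k)) * T (fun k => bv (v k)) := by
    have e : m = fun k => ∑ i, m k i • (bv i : Eu N) := funext fun k => eu_sum (m k)
    conv_lhs => rw [e]
    have := T.toMultilinearMap.map_sum (fun k (i : Fin N) => m k i • (bv i : Eu N))
    refine this.trans (Finset.sum_congr rfl fun v _ => ?_)
    have := T.toMultilinearMap.map_smul_univ (fun k => m k (v k)) (fun k => bv (v k))
    exact this
  rw [h1, Real.norm_eq_abs]
  refine (Finset.abs_sum_le_sum_abs _ _).trans ?_
  have : ∀ v ∈ (Finset.univ : Finset (Fin n → Fin N)),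
      |(∏ k, m k (v k)) * T (fun k => bv (v k))| ≤ (∏ k, ‖m k‖) * B := by
    intro v _
    rw [abs_mul, Finset.abs_prod]
    exact mul_le_mul (Finset.prod_le_prod (fun _ _ => abs_nonneg _)
      fun k _ => abs_coord_le _ _) (h v) (abs_nonneg _)
      (Finset.prod_nonneg fun _ _ => norm_nonneg _)
  refine (Finset.sum_le_card_nsmul _ _ _ this).trans (le_of_eq ?_)
  simp
  ring

lemma rpow_derivs (p c1 c2 : ℝ) (hc1 : 0 < c1) (n : ℕ) :
    ∃ C : ℝ, 0 ≤ C ∧ ∀ t ∈ Set.Icc c1 c2, ∀ i ≤ n,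
      ‖iteratedFDerivWithin ℝ i (fun t : ℝ => t ^ p) (Set.Ioi 0) t‖ ≤ C := by
  have hs : ContDiffOn ℝ ∞ (fun t : ℝ => t ^ p) (Set.Ioi 0) :=
    contDiffOn_id.rpow_const_of_ne fun t ht => (ne_of_gt ht)
  have h : ∀ i : ℕ, ∃ C : ℝ, ∀ t ∈ Set.Icc c1 c2,
      ‖iteratedFDerivWithin ℝ i (fun t : ℝ => t ^ p) (Set.Ioi 0) t‖ ≤ C := by
    intro i
    have hc : ContinuousOn (iteratedFDerivWithin ℝ i (fun t : ℝ => t ^ p) (Set.Ioi 0))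
      (Set.Ioi 0) := hs.continuousOn_iteratedFDerivWithin
        (by exact_mod_cast (WithTop.coe_le_coe.2 le_top)) isOpen_Ioi.uniqueDiffOn
    have hc2 : ContinuousOn (iteratedFDerivWithin ℝ i (fun t : ℝ => t ^ p) (Set.Ioi 0))
      (Set.Icc c1 c2) := hc.mono fun t ht => lt_of_lt_of_le hc1 ht.1
    exact isCompact_Icc.exists_bound_of_continuousOn hc2
  choose C hC using h
  refine ⟨∑ i ∈ Finset.range (n + 1), |C i|, Finset.sum_nonneg fun _ _ => abs_nonneg _, ?_⟩
  intro t ht i hi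
  refine (hC i t ht).trans ((le_abs_self _).trans ?_)
  exact Finset.single_le_sum (f := fun i => |C i|) (fun _ _ => abs_nonneg _)
    (Finset.mem_range.2 (by omega))

/-- interior derivative estimates for `ΔU = -κ U^p` with `U` pinched. -/
lemma interior_est (N : ℕ) (p c1 c2 κ0 : ℝ) (hc1 : 0 < c1) (hc2 : 0 < c2) (hκ0 : 0 ≤ κ0) :
    ∀ r : ℕ, ∃ B : ℝ, 0 < B ∧ ∀ (O : Set (Eu N)) (U : Eu N → ℝ) (κ : ℝ), IsOpen O →
      ContDiffOn ℝ ∞ U O → (∀ y ∈ O, U y ∈ Set.Icc c1 c2) → |κ| ≤ κ0 →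
      (∀ y ∈ O, lap U y = -κ * U y ^ p) →
      ∀ y, Metric.closedBall y r ⊆ O → ∀ k ≤ r, ∀ v : Fin k → Fin N, |pdv k v U y| ≤ B := by
  intro r
  induction r with
  | zero =>
    refine ⟨c2, hc2, fun O U κ hO hU hb hκ heq y hy k hk v => ?_⟩
    obtain rfl : k = 0 := by omega
    have hyO : y ∈ O := hy (by simp)
    have := hb y hyO
    simp only [pdv]
    rw [abs_of_nonneg (by linarith [this.1])]
    exact this.2
  | succ r ih =>
    obtain ⟨B, hB0, hB⟩ := ih
    obtain ⟨C, hC0, hC⟩ := rpow_derivs p c1 c2 hc1 r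
    set D : ℝ := 1 + (N : ℝ) ^ 0 * B + ∑ i ∈ Finset.range (r + 1), (N : ℝ) ^ i * B with hD
    have hD1 : 1 ≤ D := by
      have : 0 ≤ ∑ i ∈ Finset.range (r + 1), (N : ℝ) ^ i * B :=
        Finset.sum_nonneg fun _ _ => by positivity
      rw [hD]; simp; linarith
    have hDi : ∀ i ≤ r, (N : ℝ) ^ i * B ≤ D := by
      intro i hi
      have := Finset.single_le_sum (f := fun i => (N : ℝ) ^ i * B) (s := Finset.range (r + 1))
        (fun _ _ => by positivity) (Finset.mem_range.2 (by omega : i < r + 1))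
      have h2 : 0 ≤ (N : ℝ) ^ 0 * B := by positivity
      rw [hD]; linarith
    set E : ℝ := κ0 * (r.factorial * C * D ^ r) with hE
    have hE0 : 0 ≤ E := by positivity
    set A : ℝ := B + E with hA
    have hA0 : 0 < A := by positivity
    refine ⟨B + (N + 1) * A, by positivity, fun O U κ hO hU hb hκ heq y hy k hk v => ?_⟩
    have hNA : 0 ≤ ((N : ℝ) + 1) * A := by positivity
    have hsub : ∀ z ∈ Metric.closedBall y 1, Metric.closedBall z r ⊆ O := by
      intro z hz w hw
      apply hy
      simp only [Metric.mem_closedBall] at hz hw ⊢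
      push_cast
      linarith [dist_triangle w z y]
    rcases Nat.lt_or_ge k (r + 1) with hk' | hk'
    · have := hB O U κ hO hU hb hκ heq y (hsub y (by simp)) k (by omega) v
      linarith
    · obtain rfl : k = r + 1 := by omega
      have hzO : ∀ z ∈ Metric.closedBall y 1, z ∈ O := fun z hz =>
        hsub z hz (Metric.mem_closedBall_self (Nat.cast_nonneg r))
      have hg := grad_bound hO (pdv_cdo hO hU r (Fin.tail v)) (x := y) hzO hA0
        (fun z hz => by
          have := hB O U κ hO hU hb hκ heq z (hsub z hz) r le_rfl (Fin.tail v)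
          linarith) (fun z hz => by
          have hz0 := hzO z hz
          rw [lap_pdv hO hU r _ z hz0, pdv_congr hO heq r _ z hz0]
          have hUp : ContDiffOn ℝ ∞ (fun y => U y ^ p) O :=
            hU.rpow_const_of_ne fun y hy => (lt_of_lt_of_le hc1 (hb y hy).1).ne'
          rw [pdv_const_mul hO hUp (-κ) r _ z hz0, abs_mul, abs_neg, pdv_eq hO hUp r _ z hz0]
          have n1 : ‖iteratedFDeriv ℝ r (fun y => U y ^ p) z‖ ≤ r.factorial * C * D ^ r := by
            have := norm_iteratedFDerivWithin_comp_le (𝕜 := ℝ) (g := fun t : ℝ => t ^ p) (f := U)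
              (n := r) (s := O) (t := Set.Ioi 0) (x := z) (N := ∞) (C := C) (D := D)
              (contDiffOn_id.rpow_const_of_ne fun t ht => (ne_of_gt ht)) hU
              (by exact_mod_cast (WithTop.coe_le_coe.2 le_top)) isOpen_Ioi.uniqueDiffOn
              hO.uniqueDiffOn (fun y hy => lt_of_lt_of_le hc1 (hb y hy).1) hz0
              (fun i hi => hC _ (hb z hz0) i hi) (fun i hi1 hi => by
                rw [iteratedFDerivWithin_of_isOpen i hO hz0]
                have h1 : ‖iteratedFDeriv ℝ i U z‖ ≤ (N : ℝ) ^ i * B := by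
                  apply norm_le_of_basis _ hB0.le
                  intro v
                  rw [← pdv_eq hO hU i v z hz0]
                  exact hB O U κ hO hU hb hκ heq z (hsub z hz) i hi v
                exact (h1.trans (hDi i hi)).trans (le_self_pow₀ hD1 (by omega)))
            rw [iteratedFDerivWithin_of_isOpen r hO hz0] at this
            exact this
          have n2 : |iteratedFDeriv ℝ r (fun y => U y ^ p) z (fun k => bv (Fin.tail v k))|
              ≤ r.factorial * C * D ^ r := by
            have := (iteratedFDeriv ℝ r (fun y => U y ^ p) z).le_opNorm
              (fun k => bv (Fin.tail v k))
            simp only [norm_bv, Finset.prod_const_one, mul_one, Real.norm_eq_abs] at this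
            linarith
          have n3 := mul_le_mul hκ n2 (abs_nonneg _) hκ0
          linarith) (v 0)
      simp only [pdv]
      linarith

end HODE

namespace HODE
open scoped ContDiff Topology

variable {N : ℕ} {O : Set (Eu N)} {x : Eu N}

lemma lap_const_mul (hO : IsOpen O) {f : Eu N → ℝ} (hf : ContDiffOn ℝ ∞ f O) (a : ℝ) {y : Eu N}
    (hy : y ∈ O) : lap (fun y => a * f y) y = a * lap f y := by
  unfold lap
  rw [Finset.mul_sum]
  refine Finset.sum_congr rfl fun i _ => ?_
  rw [pd_congr hO (fun z hz => pd_const_mul a f (da hO hf hz) i) i y hy]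
  exact pd_const_mul a _ (da hO (pd_cdo hO hf i) hy) i

lemma unit_est (N : ℕ) (hN : 2 ≤ N) (p : ℝ) (hp : 1 < p)
    (hsub : ((N : ℝ) - 2) * p < N + 2) (s : ℕ) :
    ∃ B : ℝ, 0 < B ∧ ∀ (O : Set (Eu N)) (u : Eu N → ℝ), IsOpen O → ContDiffOn ℝ ∞ u O →
      (∀ y ∈ O, 0 ≤ u y) → (∀ y ∈ O, lap u y = -(u y ^ p)) →
      Metric.closedBall 0 (s + 2) ⊆ O → ∀ k ≤ s, ∀ v : Fin k → Fin N, |pdv k v u 0| ≤ B := by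
  obtain ⟨M, hM1, hM⟩ := sup_grad_bound N hN p hp hsub
  have hM0 : 0 < M := by linarith
  set L : ℝ := s + 1 with hL
  obtain ⟨B, hB0, hB⟩ := interior_est N p (Real.exp (-(M * L))) (Real.exp (M * L)) (M ^ (p - 1))
    (Real.exp_pos _) (Real.exp_pos _) (by positivity) s
  refine ⟨M * B, by positivity, fun O u hO hu h0 heq hball k hk v => ?_⟩
  have hLO : ∀ y : Eu N, ‖y‖ ≤ L → Metric.closedBall y 1 ⊆ O := by
    intro y hy z hz
    apply hball
    rw [Metric.mem_closedBall] at hz ⊢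
    have := dist_triangle z y 0
    rw [dist_zero_right y] at this
    linarith
  have hLO' : ∀ y : Eu N, ‖y‖ ≤ L → y ∈ O := fun y hy =>
    hLO y hy (Metric.mem_closedBall_self zero_le_one)
  have hL0 : 0 < L := by positivity
  have h00 : (0 : Eu N) ∈ O := hLO' 0 (by simpa using hL0.le)
  have hu0M : u 0 ≤ M := (hM O u hO hu h0 heq 0 (hLO 0 (by simpa using hL0.le))).1
  have hH := harnack hO hu hM0.le hLO' h0
    (fun y hy => (hM O u hO hu h0 heq y (hLO y hy)).2)
  have hbO : Metric.ball (0 : Eu N) L ⊆ O := fun y hy => hLO' y (mem_ball_zero_iff.1 hy).le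
  have hub := hu.mono hbO
  have h0b : (0 : Eu N) ∈ Metric.ball (0 : Eu N) L := Metric.mem_ball_self hL0
  rcases (h0 0 h00).eq_or_lt with hz | hpos
  · have hzero : ∀ y ∈ Metric.ball (0 : Eu N) L, u y = 0 * u y := by
      intro y hy
      have := (hH y (mem_ball_zero_iff.1 hy).le).2
      rw [← hz] at this
      have h2 := h0 y (hbO hy)
      linarith
    rw [pdv_congr Metric.isOpen_ball hzero k v 0 h0b,
      pdv_const_mul Metric.isOpen_ball hub 0 k v 0 h0b]
    simp
    positivity
  · have hUeq := hB (Metric.ball 0 L) (fun y => (u 0)⁻¹ * u y) (u 0 ^ (p - 1)) Metric.isOpen_ball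
      (contDiffOn_const.mul hub) (fun y hy => by
        have := hH y (mem_ball_zero_iff.1 hy).le
        constructor
        · rw [inv_mul_eq_div, le_div_iff₀ hpos]; exact this.1
        · rw [inv_mul_eq_div, div_le_iff₀ hpos]; exact this.2)
      (by
        rw [abs_of_nonneg (by positivity)]
        exact Real.rpow_le_rpow hpos.le hu0M (by linarith)) (fun y hy => by
        have hyO := hbO hy
        rw [lap_const_mul Metric.isOpen_ball hub _ hy, heq y hyO,
          Real.mul_rpow (by positivity) (h0 y hyO), Real.inv_rpow hpos.le, Real.rpow_sub hpos,
          Real.rpow_one]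
        have : u 0 ^ p ≠ 0 := by positivity
        field_simp) 0 (fun y hy => by
        have : dist y 0 ≤ s := hy
        rw [Metric.mem_ball, hL]
        linarith) k hk v
    rw [pdv_const_mul Metric.isOpen_ball hub _ k v 0 h0b, abs_mul, abs_of_pos (by positivity),
      inv_mul_eq_div, div_le_iff₀ hpos] at hUeq
    have := mul_le_mul_of_nonneg_left hu0M hB0.le
    linarith

section scaling
variable {Om : Set (Eu N)} {u : Eu N → ℝ} {ρ : ℝ}

lemma pd_scale (ρ : ℝ) (x y : Eu N) (f : Eu N → ℝ) (hf : DifferentiableAt ℝ f (x + ρ • y))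
    (i : Fin N) : pd i (fun y => f (x + ρ • y)) y = ρ * pd i f (x + ρ • y) := by
  have h1 : HasFDerivAt (fun y : Eu N => x + ρ • y) (ρ • ContinuousLinearMap.id ℝ (Eu N)) y :=
    ((hasFDerivAt_id y).const_smul ρ).const_add x
  have h2 := hf.hasFDerivAt.comp y h1
  refine (pd_of h2 i).trans ?_
  simp [pd]

lemma preim_open (hO : IsOpen Om) (x : Eu N) (ρ : ℝ) : IsOpen {y : Eu N | x + ρ • y ∈ Om} :=
  hO.preimage (by fun_prop : Continuous fun y : Eu N => x + ρ • y)

lemma scale_cdo (hu : ContDiffOn ℝ ∞ u Om) (x : Eu N) (ρ : ℝ) :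
    ContDiffOn ℝ ∞ (fun y => u (x + ρ • y)) {y : Eu N | x + ρ • y ∈ Om} :=
  hu.comp (by fun_prop) fun _ hy => hy

lemma pdv_scale (hO : IsOpen Om) (hu : ContDiffOn ℝ ∞ u Om) (x : Eu N) (ρ : ℝ) :
    ∀ (n : ℕ) (v : Fin n → Fin N), ∀ y ∈ {y : Eu N | x + ρ • y ∈ Om},
      pdv n v (fun y => u (x + ρ • y)) y = ρ ^ n * pdv n v u (x + ρ • y)
  | 0, _ => fun y _ => by simp [pdv]
  | n + 1, v => fun y hy => by
    simp only [pdv]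
    have hc := pdv_cdo hO hu n (Fin.tail v)
    rw [pd_congr (preim_open hO x ρ) (pdv_scale hO hu x ρ n (Fin.tail v)) (v 0) y hy,
      pd_const_mul _ _ (da (preim_open hO x ρ) (scale_cdo hc x ρ) hy),
      pd_scale ρ x y _ (da hO hc hy)]
    ring

lemma lap_scale (hO : IsOpen Om) (hu : ContDiffOn ℝ ∞ u Om) (x : Eu N) (ρ : ℝ) (y : Eu N)
    (hy : x + ρ • y ∈ Om) : lap (fun y => u (x + ρ • y)) y = ρ ^ 2 * lap u (x + ρ • y) := by
  unfold lap
  rw [Finset.mul_sum]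
  refine Finset.sum_congr rfl fun i _ => ?_
  exact pdv_scale hO hu x ρ 2 (fun _ => i) y hy

end scaling

lemma ball_sub {Om : Set (Eu N)} (hO : IsOpen Om) (hne : Om ≠ Set.univ) (hx : x ∈ Om) :
    0 < Metric.infDist x (frontier Om) ∧
      Metric.ball x (Metric.infDist x (frontier Om)) ⊆ Om := by
  have hfn : (frontier Om).Nonempty := nonempty_frontier_iff.2 ⟨⟨x, hx⟩, hne⟩
  have hxf : x ∉ frontier Om := fun h => by
    rw [hO.frontier_eq] at h; exact h.2 hx
  have hpos : 0 < Metric.infDist x (frontier Om) :=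
    (isClosed_frontier.notMem_iff_infDist_pos hfn).1 hxf
  refine ⟨hpos, ?_⟩
  refine (convex_ball x _).isPreconnected.subset_of_closure_inter_subset hO
    ⟨x, Metric.mem_ball_self hpos, hx⟩ ?_
  rintro z ⟨hz1, hz2⟩
  by_contra hz
  have hzf : z ∈ frontier Om := by rw [hO.frontier_eq]; exact ⟨hz1, hz⟩
  have := Metric.infDist_le_dist_of_mem (x := x) hzf
  rw [Metric.mem_ball, dist_comm] at hz2
  linarith

lemma final_bound (N : ℕ) (hN : 2 ≤ N) (p : ℝ) (hp : 1 < p)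
    (hsub : ((N : ℝ) - 2) * p < N + 2) (s : ℕ) :
    ∃ C : ℝ, 0 < C ∧ ∀ (Om : Set (Eu N)) (u : Eu N → ℝ), IsOpen Om → Om ≠ Set.univ →
      ContDiffOn ℝ ∞ u Om →
      (∀ y ∈ Om, 0 ≤ u y) → (∀ y ∈ Om, lap u y = -(u y ^ p)) → ∀ x ∈ Om,
      ∑ r ∈ Finset.range (s + 1), ‖iteratedFDeriv ℝ r u x‖ ^ ((p - 1) / ((p - 1) * r + 2)) ≤
        C * (Metric.infDist x (frontier Om))⁻¹ := by
  obtain ⟨B, hB0, hB⟩ := unit_est N hN p hp hsub s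
  have hN0 : (0 : ℝ) < N := by exact_mod_cast (by omega : 0 < N)
  have hp1 : 0 < p - 1 := by linarith
  refine ⟨∑ r ∈ Finset.range (s + 1),
    ((N : ℝ) ^ r * B) ^ ((p - 1) / ((p - 1) * r + 2)) * (s + 3), ?_, ?_⟩
  · refine Finset.sum_pos (fun r _ => by positivity) ⟨0, by simp⟩
  intro Om u hO hne hu h0 heq x hx
  obtain ⟨hd0, hdsub⟩ := ball_sub hO hne hx
  set dd := Metric.infDist x (frontier Om) with hdd
  set ρ : ℝ := dd / (s + 3) with hρ
  have hρ0 : 0 < ρ := by positivity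
  set a : ℝ := ρ ^ (2 / (p - 1)) with ha
  have ha0 : 0 < a := by positivity
  have hap : a ^ p = a * ρ ^ 2 := by
    have e1 : a ^ p = a ^ (1 + (p - 1)) := by ring_nf
    rw [e1, Real.rpow_add ha0, Real.rpow_one]
    congr 1
    rw [ha, ← Real.rpow_mul hρ0.le, div_mul_cancel₀ _ hp1.ne']
    exact Real.rpow_two ρ
  have hbound : ∀ k ≤ s, ∀ v : Fin k → Fin N, a * (ρ ^ k * |pdv k v u x|) ≤ B := by
    intro k hk v
    have hO' := preim_open hO x ρ
    have hu' := scale_cdo hu x ρ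
    have h0' : (0 : Eu N) ∈ {y : Eu N | x + ρ • y ∈ Om} := by simpa using hx
    have := hB {y : Eu N | x + ρ • y ∈ Om} (fun y => a * u (x + ρ • y)) hO'
      (contDiffOn_const.mul hu') (fun y hy => mul_nonneg ha0.le (h0 _ hy)) (fun y hy => by
        rw [lap_const_mul hO' hu' a hy, lap_scale hO hu x ρ y hy, heq _ hy,
          Real.mul_rpow ha0.le (h0 _ hy), hap]
        ring) (fun y hy => by
        apply hdsub
        have hy' : ‖y‖ ≤ s + 2 := by simpa using hy
        rw [Metric.mem_ball, dist_eq_norm, add_sub_cancel_left, norm_smul, Real.norm_eq_abs,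
          abs_of_pos hρ0]
        calc ρ * ‖y‖ ≤ ρ * (s + 2) := mul_le_mul_of_nonneg_left hy' hρ0.le
          _ < ρ * (s + 3) := by
            apply mul_lt_mul_of_pos_left _ hρ0; linarith
          _ = dd := by rw [hρ]; field_simp) k hk v
    rw [pdv_const_mul hO' hu' a k v 0 h0', pdv_scale hO hu x ρ k v 0 h0', abs_mul, abs_mul,
      abs_of_pos ha0, abs_of_pos (pow_pos hρ0 k)] at this
    simpa using this
  rw [Finset.sum_mul]
  refine Finset.sum_le_sum fun r hr => ?_
  have hrs : r ≤ s := by have := Finset.mem_range.1 hr; omega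
  set θ : ℝ := (p - 1) / ((p - 1) * r + 2) with hθ
  have hden : 0 < (p - 1) * (r : ℝ) + 2 := by positivity
  have hθ0 : 0 < θ := by positivity
  have haρ : 0 < a * ρ ^ r := by positivity
  have hnorm : ‖iteratedFDeriv ℝ r u x‖ ≤ (N : ℝ) ^ r * (B / (a * ρ ^ r)) := by
    apply norm_le_of_basis _ (by positivity)
    intro v
    rw [← pdv_eq hO hu r v x hx, le_div_iff₀ haρ]
    have := hbound r hrs v
    linarith
  have h1 := Real.rpow_le_rpow (norm_nonneg _) hnorm hθ0.le
  have h2 : (N : ℝ) ^ r * (B / (a * ρ ^ r)) = ((N : ℝ) ^ r * B) / (a * ρ ^ r) := by ring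
  have h3 : (a * ρ ^ r) ^ θ = ρ := by
    rw [ha, ← Real.rpow_natCast, ← Real.rpow_add hρ0, ← Real.rpow_mul hρ0.le]
    have : (2 / (p - 1) + (r : ℝ)) * θ = 1 := by
      rw [hθ]; field_simp; ring
    rw [this, Real.rpow_one]
  rw [h2, Real.div_rpow (by positivity) haρ.le, h3] at h1
  refine h1.trans (le_of_eq ?_)
  rw [hρ]
  field_simp

end HODE

/-- **Theorem 2.4.** Let `N ≥ 2`, `1 < λ < λ_s` (with `λ_s = (N+2)/(N-2)` if `N > 2`,
`λ_s = ∞` if `N = 2`), and let `Ω ≠ ℝ^N` be a domain in `ℝ^N`. Then for every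
nonnegative integer `s` there is `C = C(N, λ, s) > 0` (independent of `Ω` and `u`)
such that any nonnegative smooth solution `u` of `-Δu = u^λ` on `Ω` satisfies
`∑_{r=0}^{s} |∇^r u(x)|^{(λ-1)/((λ-1)r+2)} ≤ C ⬝ dist(x, ∂Ω)⁻¹` for all `x ∈ Ω`. -/
theorem higher_order_derivative_estimate
    (N : ℕ) (hN : 2 ≤ N) (lam : ℝ)
    (hlam₁ : 1 < lam)
    (hlam₂ : (N : ℝ) > 2 → lam < ((N : ℝ) + 2) / ((N : ℝ) - 2))
    (s : ℕ) :
    ∃ C : ℝ, 0 < C ∧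
      ∀ Ω : Set (EuclideanSpace ℝ (Fin N)),
        IsOpen Ω → IsConnected Ω → Ω ≠ Set.univ →
        ∀ u : EuclideanSpace ℝ (Fin N) → ℝ, ContDiffOn ℝ (⊤ : ℕ∞) u Ω →
          (∀ x ∈ Ω, 0 ≤ u x) →
          (∀ x ∈ Ω, -laplacian u x = u x ^ lam) →
          ∀ x ∈ Ω,
            ∑ r ∈ Finset.range (s + 1),
                ‖iteratedFDeriv ℝ r u x‖ ^ ((lam - 1) / ((lam - 1) * r + 2)) ≤
              C * (infDist x (frontier Ω))⁻¹ := by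
  have hsub : ((N : ℝ) - 2) * lam < N + 2 := by
    have hN' : (2 : ℝ) ≤ N := by exact_mod_cast hN
    rcases hN'.eq_or_lt with h | h
    · rw [← h]; norm_num
    · have := hlam₂ h
      rw [lt_div_iff₀ (by linarith)] at this
      linarith
  obtain ⟨C, hC0, hC⟩ := HODE.final_bound N hN lam hlam₁ hsub s
  refine ⟨C, hC0, fun Ω hO _ hne u hu h0 heq x hx => hC Ω u hO hne hu h0 (fun y hy => ?_) x hx⟩
  rw [← HODE.laplacian_eq hO hu hy]
  linarith [heq y hy]
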